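/- arXiv:1111.7263 — 2 statements merged into one kernel-verified Lean document; each statement's English description precedes it below -/
import Mathlib

section
/- Let k be a field of characteristic 0 and n ≥ 4. Then J_2(4,n) is generated in degrees ≤ 3: the ideal of relations among the 2-minors of a generic 4×n matrix is generated by its elements of degree at most 3 (quadrics and cubics). -/
open MvPolynomial

/-- The `t`-minor `[I|J]` of the generic `m × n` matrix. -/
noncomputable def genericMinor (k : Type*) [CommRing k] (m n t : ℕ)
    (I : Finset (Fin m)) (J : Finset (Fin n)) (hI : I.card = t) (hJ : J.card = t) :
    MvPolynomial (Fin m × Fin n) k :=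
  Matrix.det (Matrix.of fun a b : Fin t =>
    MvPolynomial.X ((↑(I.orderIsoOfFin hI a) : Fin m), (↑(J.orderIsoOfFin hJ b) : Fin n)))

/-- Index set for the `t`-minors of an `m × n` matrix: pairs `(I, J)` of a `t`-element set
of rows and a `t`-element set of columns. -/
def MinorIndex (t m n : ℕ) : Type :=
  {p : Finset (Fin m) × Finset (Fin n) // p.1.card = t ∧ p.2.card = t}

/-- The presentation map `π : S_t(m,n) → R(m,n)`, sending the indeterminate `y_{I,J}`
to the `t`-minor `[I|J]`. -/
noncomputable def minorPresentation (k : Type*) [CommRing k] (t m n : ℕ) :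
    MvPolynomial (MinorIndex t m n) k →ₐ[k] MvPolynomial (Fin m × Fin n) k :=
  MvPolynomial.aeval fun p => genericMinor k m n t p.1.1 p.1.2 p.2.1 p.2.2

/-- `J_t(m,n)`: the ideal of relations of the `t`-minors of the generic `m × n` matrix. -/
noncomputable def minorRelations (k : Type*) [CommRing k] (t m n : ℕ) :
    Ideal (MvPolynomial (MinorIndex t m n) k) :=
  RingHom.ker (minorPresentation k t m n).toRingHom

/-- An ideal of a polynomial ring is generated in degrees `≤ D` if it is generated by its
elements of total degree at most `D`. -/
def GeneratedInDegreesLE {k σ : Type*} [CommRing k]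
    (I : Ideal (MvPolynomial σ k)) (D : ℕ) : Prop :=
  I = Ideal.span {x | x ∈ I ∧ x.totalDegree ≤ D}

/-!
A product of `d` indeterminates is a function `Θ` of a row word and a column word whose `2d`
positions are paired into `d` blocks. The group algebra `A` of the permutations of the positions
acts on such functions from the left through rows and from the right through columns, and `Θ` is
fixed by the projector `e` onto tensors that are alternating in each block. Under the presentation,
`Θ` becomes a multiple of `e` applied to a commutative monomial, so the elements of `e A e` act on
its image equally from both sides. For a permutation moving points of at most three blocks this
equality is a consequence of relations of degree at most three.

Such permutations suffice: modulo the algebra they generate in `e A e`, the flips of a block act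
by signs. If two permutations share a single block, averaging over the flips lets one insert a flip
between them; this evaluates a suitable product of block exchanges with both signs, and since `2`
is invertible every permutation is reached by induction on the number of blocks.

Thus, modulo relations of degree at most three, `e A e` acts on `Θ` equally from both sides.
Because `A` is semisimple, `Θ = e Ψ` for some `Ψ` on which all of `A` acts equally from both sides.
Such a `Ψ` depends only on the commutative monomial attached to the two words, so it defines a
linear map `P` from the polynomial ring to the quotient of the presentation ring by the relations of
degree at most three. Composed with the presentation, `P` is the quotient map; hence every relation
lies in that ideal.
-/

namespace MinorRelations

open Equiv

section SemisimpleBimodule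

open MulOpposite

variable {A : Type*} [Ring A]

theorem exists_forall_mul_eq_of_isSemisimpleRing [IsSemisimpleRing A] (I : TwoSidedIdeal A) :
    ∃ f ∈ I, ∀ g ∈ I, f * g = g ∧ g * f = g := by
  have right : ∃ f ∈ I, ∀ g ∈ I, g * f = g := by
    obtain ⟨f, hf, hI⟩ := IsSemisimpleRing.ideal_eq_span_idempotent I.asIdeal
    refine ⟨f, TwoSidedIdeal.mem_asIdeal.1 (hI ▸ Ideal.mem_span_singleton_self f), fun g hg => ?_⟩
    obtain ⟨a, rfl⟩ := Ideal.mem_span_singleton'.1 (hI ▸ TwoSidedIdeal.mem_asIdeal.2 hg)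
    rw [mul_assoc, hf.eq]
  have left : ∃ f ∈ I, ∀ g ∈ I, f * g = g := by
    have := isSemisimpleRing_mulOpposite_iff.2 ‹IsSemisimpleRing A›
    obtain ⟨f, hf, hI⟩ := IsSemisimpleRing.ideal_eq_span_idempotent I.asIdealOpposite
    refine ⟨f.unop, TwoSidedIdeal.mem_asIdealOpposite.1
      (hI ▸ Ideal.mem_span_singleton_self f), fun g hg => ?_⟩
    have hg' : op g ∈ I.asIdealOpposite := TwoSidedIdeal.mem_asIdealOpposite.2 hg
    obtain ⟨a, ha⟩ := Ideal.mem_span_singleton'.1 (hI ▸ hg')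
    apply op_injective
    rw [op_mul, op_unop, ← ha, mul_assoc, hf.eq]
  obtain ⟨f, hf, hfr⟩ := right
  obtain ⟨f', hf', hfl⟩ := left
  obtain rfl : f' = f := (hfr f' hf').symm.trans (hfl f hf)
  exact ⟨f', hf, fun g hg => ⟨hfl g hg, hfr g hg⟩⟩

variable {Z : Type*} [AddCommGroup Z] [Module A Z] [Module Aᵐᵒᵖ Z] [SMulCommClass A Aᵐᵒᵖ Z]

-- For `z = ∑ xⱼ e yⱼ` the witness is `Ψ = ∑ xⱼ Θ yⱼ`.
theorem exists_smul_eq_of_mem_span_idempotent {e : A} {Θ : Z} (hl : e • Θ = Θ) (hr : op e • Θ = Θ)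
    (hΘ : ∀ a : A, (e * a * e) • Θ = op (e * a * e) • Θ) {z : A}
    (hz : z ∈ TwoSidedIdeal.span {e}) :
    ∃ Ψ : Z, ∀ p q : A, (p * e * q) • Ψ = p • op (q * z) • Θ ∧
      op (p * e * q) • Ψ = op q • (z * p) • Θ := by
  have : SMulCommClass Aᵐᵒᵖ A Z := SMulCommClass.symm _ _ _
  induction hz using TwoSidedIdeal.span_induction with
  | mem z hz =>
    obtain rfl := Set.mem_singleton_iff.1 hz
    refine ⟨Θ, fun p q => ⟨?_, ?_⟩⟩
    · calc (p * z * q) • Θ = p • (z * q * z) • Θ := by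
            rw [smul_smul, ← mul_assoc, ← mul_assoc, mul_smul _ z, hl]
        _ = p • op (q * z) • Θ := by rw [hΘ, mul_assoc, op_mul, mul_smul, smul_comm, hr, smul_comm]
    · calc op (p * z * q) • Θ = op q • op (z * p * z) • Θ := by
            rw [smul_smul, ← op_mul, mul_assoc z, mul_assoc z, op_mul z, mul_smul _ (op z), hr]
        _ = op q • (z * p) • Θ := by rw [← hΘ, mul_smul _ z, hl]
  | zero => exact ⟨0, by simp⟩
  | add x y _ _ hx hy =>
    obtain ⟨Ψ, hΨ⟩ := hx
    obtain ⟨Ψ', hΨ'⟩ := hy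
    exact ⟨Ψ + Ψ', fun p q => by
      simp only [smul_add, hΨ, hΨ', mul_add, add_mul, op_add, add_smul, and_self]⟩
  | neg x _ hx =>
    obtain ⟨Ψ, hΨ⟩ := hx
    exact ⟨-Ψ, fun p q => by simp only [smul_neg, hΨ, mul_neg, neg_mul, op_neg, neg_smul, and_self]⟩
  | left_absorb a x _ hx =>
    obtain ⟨Ψ, hΨ⟩ := hx
    refine ⟨a • Ψ, fun p q => ⟨?_, ?_⟩⟩
    · rw [smul_smul, mul_assoc, (hΨ p (q * a)).1, mul_assoc]
    · rw [smul_comm, (hΨ p q).2, smul_comm, smul_smul, mul_assoc]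
  | right_absorb b x _ hx =>
    obtain ⟨Ψ, hΨ⟩ := hx
    refine ⟨op b • Ψ, fun p q => ⟨?_, ?_⟩⟩
    · rw [smul_comm, (hΨ p q).1, ← mul_assoc, op_mul _ b, mul_smul, smul_comm]
    · rw [smul_smul, ← op_mul, ← mul_assoc, ← mul_assoc, (hΨ (b * p) q).2, ← mul_assoc]

-- With `z` the identity element of the ideal `AeA`, the `Ψ` of the previous lemma satisfies
-- `(peq)Ψ = pΘq = Ψ(peq)`.
theorem exists_central_of_isSemisimpleRing [IsSemisimpleRing A] {e : A} {Θ : Z}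
    (hl : e • Θ = Θ) (hr : op e • Θ = Θ) (hΘ : ∀ a : A, (e * a * e) • Θ = op (e * a * e) • Θ) :
    ∃ Ψ : Z, (∀ a : A, a • Ψ = op a • Ψ) ∧ e • Ψ = Θ := by
  have : SMulCommClass Aᵐᵒᵖ A Z := SMulCommClass.symm _ _ _
  obtain ⟨f, hf, hfI⟩ := exists_forall_mul_eq_of_isSemisimpleRing (TwoSidedIdeal.span {e})
  obtain ⟨Ψ, hΨ⟩ := exists_smul_eq_of_mem_span_idempotent hl hr hΘ hf
  have he : e ∈ TwoSidedIdeal.span {e} := TwoSidedIdeal.subset_span (Set.mem_singleton e)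
  have hΨl (p q : A) : (p * e * q) • Ψ = p • op q • Θ := by
    have : op (q * f) • Θ = op q • Θ := by
      rw [← hr, smul_smul, smul_smul, ← op_mul, ← op_mul, ← mul_assoc,
        (hfI _ (TwoSidedIdeal.mul_mem_right _ _ _ he)).2]
    rw [(hΨ p q).1, this]
  have hΨr (p q : A) : op (p * e * q) • Ψ = p • op q • Θ := by
    have : (f * p) • Θ = p • Θ := by
      rw [← hl, smul_smul, smul_smul, mul_assoc, (hfI _ (TwoSidedIdeal.mul_mem_left _ _ _ he)).1]
    rw [(hΨ p q).2, this, smul_comm]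
  have comm (g : A) (hg : g ∈ TwoSidedIdeal.span {e}) : g • Ψ = op g • Ψ := by
    rw [TwoSidedIdeal.mem_span_iff_mem_addSubgroup_closure] at hg
    induction hg using AddSubgroup.closure_induction with
    | mem g hg =>
      obtain ⟨_, ⟨p, -, _, rfl, rfl⟩, q, -, rfl⟩ := hg
      exact (hΨl p q).trans (hΨr p q).symm
    | zero => simp
    | add g g' _ _ hg hg' => simp only [add_smul, op_add, hg, hg']
    | neg g _ hg => simp only [neg_smul, op_neg, hg]
  refine ⟨f • Ψ, fun a => ?_, ?_⟩
  · have haf : a * f = f * a :=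
      calc a * f = f * (a * f) := ((hfI _ (TwoSidedIdeal.mul_mem_left _ a f hf)).1).symm
        _ = f * a := by rw [← mul_assoc, (hfI _ (TwoSidedIdeal.mul_mem_right _ f a hf)).2]
    rw [smul_smul, comm _ (TwoSidedIdeal.mul_mem_left _ a f hf), haf, op_mul, mul_smul, comm f hf]
  · rw [smul_smul, (hfI e he).2]
    simpa using hΨl 1 1

end SemisimpleBimodule

section CharIdempotent

open MonoidAlgebra

variable {k G H : Type*} [Field k] [Group G] [Group H] [Fintype H]

/-- The idempotent of the group algebra of `G` attached to a linear character `χ` of a finite group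
`H` mapped to `G` by `ρ`; it projects a module onto the vectors on which `H` acts through `χ`. -/
noncomputable def charIdempotent (ρ : H →* G) (χ : H →* k) : MonoidAlgebra k G :=
  (Fintype.card H : k)⁻¹ • ∑ h, χ h⁻¹ • MonoidAlgebra.of k G (ρ h)

variable (ρ : H →* G) (χ : H →* k)

theorem of_mul_charIdempotent (h : H) :
    of k G (ρ h) * charIdempotent ρ χ = χ h • charIdempotent ρ χ := by
  rw [charIdempotent, mul_smul_comm, smul_comm (χ h)]
  congr 1
  rw [Finset.mul_sum, Finset.smul_sum]
  refine Fintype.sum_equiv (Equiv.mulLeft h) _ _ fun g => ?_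
  rw [Equiv.coe_mulLeft, smul_smul, mul_smul_comm, ← map_mul, ← map_mul, mul_comm (χ h),
    ← map_mul, mul_inv_rev, inv_mul_cancel_right]

theorem charIdempotent_mul_of (h : H) :
    charIdempotent ρ χ * of k G (ρ h) = χ h • charIdempotent ρ χ := by
  rw [charIdempotent, smul_mul_assoc, smul_comm (χ h)]
  congr 1
  rw [Finset.sum_mul, Finset.smul_sum]
  refine Fintype.sum_equiv (Equiv.mulRight h) _ _ fun g => ?_
  rw [Equiv.coe_mulRight, smul_smul, smul_mul_assoc, ← map_mul, ← map_mul, ← map_mul,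
    mul_inv_rev, mul_inv_cancel_left]

theorem isIdempotentElem_charIdempotent [NeZero (Fintype.card H : k)] :
    IsIdempotentElem (charIdempotent ρ χ) := by
  have key : (∑ h, χ h⁻¹ • of k G (ρ h)) * charIdempotent ρ χ =
      (Fintype.card H : k) • charIdempotent ρ χ := by
    simp only [Finset.sum_mul, smul_mul_assoc, of_mul_charIdempotent, smul_smul, ← map_mul,
      inv_mul_cancel, map_one, one_smul, Finset.sum_const, Finset.card_univ, Nat.cast_smul_eq_nsmul]
  rw [IsIdempotentElem]
  nth_rw 1 [charIdempotent]
  rw [smul_mul_assoc, key, inv_smul_smul₀ (NeZero.ne _)]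

variable {ρ χ}

theorem commute_of_charIdempotent {g : G} (σ : H ≃ H) (hχ : ∀ h, χ (σ h) = χ h)
    (hσ : ∀ h, g * ρ h = ρ (σ h) * g) : Commute (of k G g) (charIdempotent ρ χ) := by
  rw [Commute, SemiconjBy, charIdempotent, mul_smul_comm, smul_mul_assoc, Finset.mul_sum,
    Finset.sum_mul]
  congr 1
  refine Fintype.sum_equiv σ _ _ fun h => ?_
  rw [mul_smul_comm, smul_mul_assoc, ← map_mul, ← map_mul, hσ, map_inv, map_inv, hχ]

end CharIdempotent

section CharIdempotentModule

open MonoidAlgebra MulOpposite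

variable {k G H Z Z' : Type*} [Field k] [Group G] [Group H] [Fintype H]
  [AddCommGroup Z] [Module k Z] [AddCommGroup Z'] [Module k Z']
  {ρ : H →* G} {χ χ' : H →* k}

theorem charIdempotent_mem {S : Submodule k (MonoidAlgebra k G)}
    (h : ∀ g, of k G (ρ g) ∈ S) : charIdempotent ρ χ ∈ S :=
  S.smul_mem _ (S.sum_mem fun g _ => S.smul_mem _ (h g))

section Left

variable [Module (MonoidAlgebra k G) Z] [IsScalarTower k (MonoidAlgebra k G) Z]
  [Module (MonoidAlgebra k G) Z'] [IsScalarTower k (MonoidAlgebra k G) Z']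

theorem charIdempotent_smul (z : Z) : charIdempotent ρ χ • z =
    (Fintype.card H : k)⁻¹ • ∑ h, χ h⁻¹ • of k G (ρ h) • z := by
  simp only [charIdempotent, smul_assoc, Finset.sum_smul]

theorem charIdempotent_smul_eq_self [NeZero (Fintype.card H : k)] {z : Z}
    (hz : ∀ h, of k G (ρ h) • z = χ h • z) : charIdempotent ρ χ • z = z := by
  simp only [charIdempotent_smul, hz, smul_smul, ← map_mul, inv_mul_cancel, map_one, one_smul,
    Finset.sum_const, Finset.card_univ, ← Nat.cast_smul_eq_nsmul k]
  rw [inv_mul_cancel₀ (NeZero.ne _), one_smul]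

theorem charIdempotent_mul_smul_apply (T : Z →ₗ[k] Z')
    (hT : ∀ h z, of k G (ρ h) • T z = χ' h • T (of k G (ρ h) • z)) (z : Z) :
    charIdempotent ρ (χ * χ') • T z = T (charIdempotent ρ χ • z) := by
  simp only [charIdempotent_smul, hT, MonoidHom.mul_apply, smul_smul, mul_assoc, ← map_mul,
    inv_mul_cancel, map_one, mul_one, map_smul, map_sum]

end Left

section Right

variable [Module (MonoidAlgebra k G)ᵐᵒᵖ Z] [IsScalarTower k (MonoidAlgebra k G)ᵐᵒᵖ Z]
  [Module (MonoidAlgebra k G)ᵐᵒᵖ Z'] [IsScalarTower k (MonoidAlgebra k G)ᵐᵒᵖ Z']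

theorem op_charIdempotent_smul (z : Z) : op (charIdempotent ρ χ) • z =
    (Fintype.card H : k)⁻¹ • ∑ h, χ h⁻¹ • op (of k G (ρ h)) • z := by
  simp only [charIdempotent, op_smul, Finset.op_sum, smul_assoc, Finset.sum_smul]

theorem op_charIdempotent_smul_eq_self [NeZero (Fintype.card H : k)] {z : Z}
    (hz : ∀ h, op (of k G (ρ h)) • z = χ h • z) : op (charIdempotent ρ χ) • z = z := by
  simp only [op_charIdempotent_smul, hz, smul_smul, ← map_mul, inv_mul_cancel, map_one, one_smul,
    Finset.sum_const, Finset.card_univ, ← Nat.cast_smul_eq_nsmul k]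
  rw [inv_mul_cancel₀ (NeZero.ne _), one_smul]

theorem op_charIdempotent_mul_smul_apply (T : Z →ₗ[k] Z')
    (hT : ∀ h z, op (of k G (ρ h)) • T z = χ' h • T (op (of k G (ρ h)) • z)) (z : Z) :
    op (charIdempotent ρ (χ * χ')) • T z = T (op (charIdempotent ρ χ) • z) := by
  simp only [op_charIdempotent_smul, hT, MonoidHom.mul_apply, smul_smul, mul_assoc, ← map_mul,
    inv_mul_cancel, map_one, mul_one, map_smul, map_sum]

end Right

end CharIdempotentModule

section Corner

variable {k A : Type*} [CommRing k] [Ring A] [Algebra k A]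

/-- The elements `a` with `e * a * e ∈ C`. Working modulo this submodule amounts to working in the
corner `e A e` modulo `C`. -/
def cornerPreimage (e : A) (C : NonUnitalSubalgebra k A) : Submodule k A :=
  C.toSubmodule.comap (LinearMap.mulLeft k e ∘ₗ LinearMap.mulRight k e)

variable {e : A} {C : NonUnitalSubalgebra k A}

theorem mem_cornerPreimage {a : A} : a ∈ cornerPreimage e C ↔ e * a * e ∈ C := by
  simp [cornerPreimage, mul_assoc]

theorem mul_mul_mem_cornerPreimage (he : IsIdempotentElem e) {a b : A}
    (ha : a ∈ cornerPreimage e C) (hb : b ∈ cornerPreimage e C) :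
    a * e * b ∈ cornerPreimage e C := by
  rw [mem_cornerPreimage] at *
  have : e * (a * e * b) * e = (e * a * e) * (e * b * e) := by
    calc e * (a * e * b) * e = e * a * e * b * e := by noncomm_ring
      _ = e * a * (e * e) * b * e := by rw [he.eq]
      _ = _ := by noncomm_ring
  exact this ▸ C.mul_mem ha hb

theorem mul_mem_cornerPreimage_of_commute_left (he : IsIdempotentElem e) {g a : A}
    (hg : g ∈ cornerPreimage e C) (hge : Commute g e) (ha : a ∈ cornerPreimage e C) :
    g * a ∈ cornerPreimage e C := by
  have h := mul_mul_mem_cornerPreimage he hg ha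
  rw [mem_cornerPreimage] at *
  rwa [hge.eq, mul_assoc e g a, ← mul_assoc, he.eq] at h

theorem mul_mem_cornerPreimage_of_commute_right (he : IsIdempotentElem e) {a g : A}
    (ha : a ∈ cornerPreimage e C) (hg : g ∈ cornerPreimage e C) (hge : Commute g e) :
    a * g ∈ cornerPreimage e C := by
  have h := mul_mul_mem_cornerPreimage he ha hg
  rw [mem_cornerPreimage] at *
  rwa [mul_assoc a, ← hge.eq, ← mul_assoc a, ← mul_assoc e, mul_assoc (e * (a * g)), he.eq] at h

theorem mul_smodEq_mul_left_of_commute (he : IsIdempotentElem e) {g a b : A}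
    (hg : g ∈ cornerPreimage e C) (hge : Commute g e) (h : a ≡ b [SMOD cornerPreimage e C]) :
    g * a ≡ g * b [SMOD cornerPreimage e C] := by
  rw [SModEq.sub_mem, ← mul_sub]
  exact mul_mem_cornerPreimage_of_commute_left he hg hge (SModEq.sub_mem.1 h)

theorem mul_smodEq_mul_right_of_commute (he : IsIdempotentElem e) {a b g : A}
    (h : a ≡ b [SMOD cornerPreimage e C]) (hg : g ∈ cornerPreimage e C) (hge : Commute g e) :
    a * g ≡ b * g [SMOD cornerPreimage e C] := by
  rw [SModEq.sub_mem, ← sub_mul]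
  exact mul_mem_cornerPreimage_of_commute_right he (SModEq.sub_mem.1 h) hg hge

theorem mul_smodEq_of_mul_eq_smul_left {g : A} {c : k} (hg : e * g = c • e) (a : A) :
    g * a ≡ c • a [SMOD cornerPreimage e C] := by
  rw [SModEq.sub_mem, mem_cornerPreimage]
  convert zero_mem C
  rw [mul_sub, ← mul_assoc, hg, smul_mul_assoc, mul_smul_comm, sub_self, zero_mul]

theorem mul_smodEq_of_mul_eq_smul_right {g : A} {c : k} (hg : g * e = c • e) (a : A) :
    a * g ≡ c • a [SMOD cornerPreimage e C] := by
  rw [SModEq.sub_mem, mem_cornerPreimage]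
  convert zero_mem C
  rw [mul_assoc, sub_mul, mul_assoc, hg, smul_mul_assoc, mul_smul_comm, sub_self, mul_zero]

end Corner

/-- The points of a set partitioned into two-element blocks indexed by `ι`. A word on these points
lists the rows, or the columns, of a product of `2`-minors, one minor for each block. -/
abbrev PairedPoint (ι : Type*) : Type _ := ι × ℤˣ

namespace PairedPoint

variable {ι : Type*}

/-- The other point of the block of `x`. -/
def partner (x : PairedPoint ι) : PairedPoint ι := (x.1, -x.2)

theorem eq_or_eq_partner {x y : PairedPoint ι} (h : x.1 = y.1) : x = y ∨ x = partner y := by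
  rcases eq_or_ne x.2 y.2 with h2 | h2
  · exact .inl (Prod.ext h h2)
  · exact .inr (Prod.ext h (Int.units_ne_iff_eq_neg.1 h2))

theorem partner_ne (x : PairedPoint ι) : partner x ≠ x := fun h =>
  units_ne_neg_self x.2 (congrArg Prod.snd h).symm

@[simp]
theorem partner_partner (x : PairedPoint ι) : partner (partner x) = x := by
  simp [partner]

@[simp]
theorem partner_fst (x : PairedPoint ι) : (partner x).1 = x.1 := rfl

variable (ι) in
/-- The permutation exchanging the two points of block `i` exactly when `f i = -1`. -/
def flip : (ι → ℤˣ) →* Perm (PairedPoint ι) where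
  toFun f :=
    { toFun := fun x => (x.1, f x.1 * x.2)
      invFun := fun x => (x.1, (f x.1)⁻¹ * x.2)
      left_inv := fun x => by simp only [inv_mul_cancel_left]
      right_inv := fun x => by simp only [mul_inv_cancel_left] }
  map_one' := by ext x <;> simp
  map_mul' f g := by ext x <;> simp [mul_assoc]

@[simp]
theorem flip_apply (f : ι → ℤˣ) (x : PairedPoint ι) : flip ι f x = (x.1, f x.1 * x.2) := rfl

/-- The permutations that fix every point outside the blocks in `U`. -/
def supportedOn (U : Finset ι) : Subgroup (Perm (PairedPoint ι)) :=
  fixingSubgroup _ {x : PairedPoint ι | x.1 ∉ U}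

variable {U V : Finset ι} {s w : Perm (PairedPoint ι)} {x y : PairedPoint ι}

theorem mem_supportedOn : w ∈ supportedOn U ↔ ∀ x, x.1 ∉ U → w x = x :=
  mem_fixingSubgroup_iff _

theorem supportedOn_mono (h : U ⊆ V) : supportedOn U ≤ supportedOn V :=
  fixingSubgroup_antitone _ _ fun x (hx : x.1 ∉ V) hU => hx (h hU)

theorem apply_fst_mem (hw : w ∈ supportedOn U) (hx : x.1 ∈ U) : (w x).1 ∈ U := by
  by_contra h
  exact h ((w.injective (mem_supportedOn.1 hw _ h)).symm ▸ hx)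

theorem fst_mem_of_apply_ne (hw : w ∈ supportedOn U) (hx : w x ≠ x) : x.1 ∈ U := by
  by_contra h
  exact hx (mem_supportedOn.1 hw x h)

theorem flip_apply_of_eq_one {f : ι → ℤˣ} (h : f x.1 = 1) : flip ι f x = x := by
  simp [h]

theorem flip_apply_of_eq_neg_one {f : ι → ℤˣ} (h : f x.1 = -1) : flip ι f x = partner x := by
  simp [h, partner]

theorem fst_ne_of_ne_of_ne_partner (h : y ≠ x) (h' : y ≠ partner x) : x.1 ≠ y.1 := fun hxy =>
  (eq_or_eq_partner hxy.symm).elim h h'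

theorem ne_of_fst_ne (h : x.1 ≠ y.1) : x ≠ y := fun h' => h (h' ▸ rfl)

theorem nodup_pair (h : x.1 ≠ y.1) : [x, partner x, y, partner y].Nodup := by
  have h1 : x ≠ y := ne_of_fst_ne h
  have h2 : x ≠ partner y := ne_of_fst_ne h
  have h3 : partner x ≠ y := ne_of_fst_ne h
  have h4 : partner x ≠ partner y := ne_of_fst_ne h
  simp [h1, h2, h3, h4, (partner_ne x).symm, (partner_ne y).symm]

theorem commute_of_disjoint (hs : s ∈ supportedOn U) (hw : w ∈ supportedOn V)
    (hUV : Disjoint U V) : Commute s w := by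
  refine Perm.Disjoint.commute fun x => ?_
  by_cases hx : x.1 ∈ U
  · exact .inr (mem_supportedOn.1 hw x (Finset.disjoint_left.1 hUV hx))
  · exact .inl (mem_supportedOn.1 hs x hx)

theorem commute_flip (hw : w ∈ supportedOn U) {f : ι → ℤˣ} (h : ∀ i ∈ U, f i = 1) :
    Commute (flip ι f) w := by
  refine Perm.Disjoint.commute fun x => ?_
  by_cases hx : x.1 ∈ U
  · exact .inl (by simp [h _ hx])
  · exact .inr (mem_supportedOn.1 hw _ hx)

variable [DecidableEq ι]

theorem swap_mem_supportedOn (hx : x.1 ∈ U) (hy : y.1 ∈ U) : swap x y ∈ supportedOn U :=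
  mem_supportedOn.2 fun _ hz => swap_apply_of_ne_of_ne (fun h => hz (h ▸ hx)) fun h => hz (h ▸ hy)

theorem mem_supportedOn_erase (hw : w ∈ supportedOn U) (hx : w x = x)
    (hx' : w (partner x) = partner x) : w ∈ supportedOn (U.erase x.1) := by
  refine mem_supportedOn.2 fun y hy => ?_
  by_cases h : y.1 = x.1
  · rcases eq_or_eq_partner h with rfl | rfl <;> assumption
  · exact mem_supportedOn.1 hw y fun hU => hy (Finset.mem_erase.2 ⟨h, hU⟩)

theorem flip_mulSingle (x : PairedPoint ι) :
    flip ι (Pi.mulSingle x.1 (-1)) = swap x (partner x) := by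
  ext1 y
  by_cases h : y.1 = x.1
  · rcases eq_or_eq_partner h with rfl | rfl <;> simp [partner]
  · have hx : y ≠ x := ne_of_fst_ne h
    have hx' : y ≠ partner x := ne_of_fst_ne h
    simp [swap_apply_of_ne_of_ne hx hx', h]

/-- The exchange of the blocks of `x` and `y` that sends `x` to `y` and `partner x` to
`partner y`. -/
def blockSwap (x y : PairedPoint ι) : Perm (PairedPoint ι) :=
  swap x y * swap (partner x) (partner y)

theorem blockSwap_mul_self (h : x.1 ≠ y.1) : blockSwap x y * blockSwap x y = 1 := by
  have := nodup_pair h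
  ext1 t
  simp only [blockSwap, Perm.mul_apply, swap_apply_def, Perm.one_apply]
  grind

theorem blockSwap_apply_fst (h : x.1 ≠ y.1) (z : PairedPoint ι) :
    (blockSwap x y z).1 = swap x.1 y.1 z.1 := by
  have := nodup_pair h
  simp only [blockSwap, Perm.mul_apply, swap_apply_def]
  grind [partner_fst, eq_or_eq_partner]

theorem blockSwap_apply_partner (h : x.1 ≠ y.1) (z : PairedPoint ι) :
    blockSwap x y (partner z) = partner (blockSwap x y z) := by
  have := nodup_pair h
  simp only [blockSwap, Perm.mul_apply, swap_apply_def]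
  grind [partner_partner]

theorem blockSwap_mul_flip (h : x.1 ≠ y.1) (f : ι → ℤˣ) :
    blockSwap x y * flip ι f = flip ι (f ∘ swap x.1 y.1) * blockSwap x y := by
  ext1 z
  rw [Perm.mul_apply, Perm.mul_apply]
  have hz := blockSwap_apply_fst h z
  rcases Int.units_eq_one_or (f z.1) with hf | hf
  · rw [flip_apply_of_eq_one hf, flip_apply_of_eq_one (by simp [hz, hf])]
  · rw [flip_apply_of_eq_neg_one hf, flip_apply_of_eq_neg_one (by simp [hz, hf]),
      blockSwap_apply_partner h]

theorem blockSwap_mem_supportedOn (hx : x.1 ∈ U) (hy : y.1 ∈ U) : blockSwap x y ∈ supportedOn U :=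
  mul_mem (swap_mem_supportedOn hx hy) (swap_mem_supportedOn hx hy)

section SignIdempotent

variable (k : Type*) [Field k] {ι : Type*}

/-- The sign of a flip, counted on the blocks in `U` only. -/
def flipSign (U : Finset ι) : (ι → ℤˣ) →* k where
  toFun f := ∏ i ∈ U, ((f i : ℤ) : k)
  map_one' := by simp
  map_mul' f g := by simp [Finset.prod_mul_distrib]

variable {k} in
theorem flipSign_apply (U : Finset ι) (f : ι → ℤˣ) : flipSign k U f = ∏ i ∈ U, ((f i : ℤ) : k) :=
  rfl

variable {k} in
theorem flipSign_mul_self (U : Finset ι) (f : ι → ℤˣ) : flipSign k U f * flipSign k U f = 1 := by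
  rw [← map_mul, show f * f = 1 from funext fun i => Int.units_mul_self (f i), map_one]

variable [DecidableEq ι]

variable {k} in
theorem flipSign_mulSingle {U : Finset ι} {i : ι} (hi : i ∈ U) (s : ℤˣ) :
    flipSign k U (Pi.mulSingle i s) = (s : ℤ) := by
  rw [flipSign_apply, Finset.prod_eq_single_of_mem i hi fun j _ hj => by simp [hj]]
  simp

variable [Fintype ι]

/-- The projector onto the tensors that are alternating in each block in `U` and symmetric in each
of the other blocks. -/
noncomputable def signIdempotent (U : Finset ι) : MonoidAlgebra k (Perm (PairedPoint ι)) :=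
  charIdempotent (flip ι) (flipSign k U)

instance [NeZero (2 : k)] : NeZero (Fintype.card (ι → ℤˣ) : k) :=
  ⟨by simp [NeZero.ne]⟩

theorem isIdempotentElem_signIdempotent [NeZero (2 : k)] (U : Finset ι) :
    IsIdempotentElem (signIdempotent k U) :=
  isIdempotentElem_charIdempotent _ _

theorem commute_blockSwap_signIdempotent {x y : PairedPoint ι} (h : x.1 ≠ y.1) :
    Commute (MonoidAlgebra.of k _ (blockSwap x y)) (signIdempotent k Finset.univ) := by
  refine commute_of_charIdempotent (arrowCongr (swap x.1 y.1) (.refl _)) (fun f => ?_)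
    fun f => ?_
  · exact Equiv.prod_comp (swap x.1 y.1).symm fun i => ((f i : ℤ) : k)
  · exact blockSwap_mul_flip h f

end SignIdempotent

section SignCorner

open MonoidAlgebra

variable {k : Type*} [Field k] {ι : Type*} [Fintype ι] [DecidableEq ι]
  {C : NonUnitalSubalgebra k (MonoidAlgebra k (Perm (PairedPoint ι)))}
  {U V : Finset ι} {s w : Perm (PairedPoint ι)} {x y : PairedPoint ι}

/-- The submodule `cornerPreimage` for the idempotent that is alternating in every block. -/
noncomputable def signCorner (C : NonUnitalSubalgebra k (MonoidAlgebra k (Perm (PairedPoint ι)))) :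
    Submodule k (MonoidAlgebra k (Perm (PairedPoint ι))) :=
  cornerPreimage (signIdempotent k Finset.univ) C

theorem of_flip_mul_smodEq (f : ι → ℤˣ) (w : Perm (PairedPoint ι)) :
    of k _ (flip ι f * w) ≡ flipSign k Finset.univ f • of k _ w [SMOD signCorner C] := by
  rw [map_mul]
  exact mul_smodEq_of_mul_eq_smul_left (charIdempotent_mul_of _ _ f) _

theorem of_mul_flip_smodEq (f : ι → ℤˣ) (w : Perm (PairedPoint ι)) :
    of k _ (w * flip ι f) ≡ flipSign k Finset.univ f • of k _ w [SMOD signCorner C] := by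
  rw [map_mul]
  exact mul_smodEq_of_mul_eq_smul_right (of_mul_charIdempotent _ _ f) _

theorem of_swap_partner_mul_smodEq (x : PairedPoint ι) (w : Perm (PairedPoint ι)) :
    of k _ (swap x (partner x) * w) ≡ -of k _ w [SMOD signCorner C] := by
  simpa [← flip_mulSingle, flipSign_mulSingle] using
    of_flip_mul_smodEq (k := k) (C := C) (Pi.mulSingle x.1 (-1)) w

theorem of_mul_swap_partner_smodEq (x : PairedPoint ι) (w : Perm (PairedPoint ι)) :
    of k _ (w * swap x (partner x)) ≡ -of k _ w [SMOD signCorner C] := by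
  simpa [← flip_mulSingle, flipSign_mulSingle] using
    of_mul_flip_smodEq (k := k) (C := C) (Pi.mulSingle x.1 (-1)) w

theorem of_blockSwap_mul_congr [NeZero (2 : k)] (hxy : x.1 ≠ y.1)
    (hC : of k _ (blockSwap x y) ∈ signCorner C) {a b : MonoidAlgebra k (Perm (PairedPoint ι))}
    (h : a ≡ b [SMOD signCorner C]) :
    of k _ (blockSwap x y) * a ≡ of k _ (blockSwap x y) * b [SMOD signCorner C] :=
  mul_smodEq_mul_left_of_commute (isIdempotentElem_signIdempotent k _) hC
    (commute_blockSwap_signIdempotent k hxy) h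

theorem mul_of_blockSwap_congr [NeZero (2 : k)] (hxy : x.1 ≠ y.1)
    (hC : of k _ (blockSwap x y) ∈ signCorner C) {a b : MonoidAlgebra k (Perm (PairedPoint ι))}
    (h : a ≡ b [SMOD signCorner C]) :
    a * of k _ (blockSwap x y) ≡ b * of k _ (blockSwap x y) [SMOD signCorner C] :=
  mul_smodEq_mul_right_of_commute (isIdempotentElem_signIdempotent k _) h hC
    (commute_blockSwap_signIdempotent k hxy)

-- Flips outside `U` commute with `s`, and flips in `U \ {c}` commute with `w`.
theorem flipSign_smul_of_mul_flip_mul_smodEq (hs : s ∈ supportedOn U) (hw : w ∈ supportedOn V)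
    {c : ι} (hUV : U ∩ V ⊆ {c}) (f : ι → ℤˣ) :
    flipSign k Finset.univ f • of k _ (s * flip ι f * w) ≡
      ((f c : ℤ) : k) • of k _ (s * flip ι (Pi.mulSingle c (f c)) * w) [SMOD signCorner C] := by
  let g : ι → ℤˣ := fun i => if i = c ∨ i ∈ U then 1 else f i
  let h : ι → ℤˣ := fun i => if i ≠ c ∧ i ∈ U then f i else 1
  have hf : f = g * Pi.mulSingle c (f c) * h := by
    ext1 i
    by_cases hc : i = c
    · subst hc; simp [g, h]
    · by_cases hU : i ∈ U <;> simp [g, h, hc, hU]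
  have hg : Commute (flip ι g) s := commute_flip hs fun i hi => by simp [g, hi]
  have hh : Commute (flip ι h) w := commute_flip hw fun i hi =>
    if_neg fun hi' => hi'.1 (Finset.mem_singleton.1 (hUV (Finset.mem_inter.2 ⟨hi'.2, hi⟩)))
  set m := s * flip ι (Pi.mulSingle c (f c)) * w with hm
  have hsw : s * flip ι f * w = flip ι g * (m * flip ι h) := by
    conv_lhs => rw [hf, map_mul, map_mul, ← mul_assoc, ← mul_assoc, ← hg.eq, mul_assoc _ _ w, hh.eq]
    simp only [hm, mul_assoc]
  have hsign : flipSign k Finset.univ f * (flipSign k Finset.univ g * flipSign k Finset.univ h) =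
      ((f c : ℤ) : k) := by
    conv_lhs => rw [hf, map_mul, map_mul, flipSign_mulSingle (Finset.mem_univ c)]
    linear_combination ((f c : ℤ) : k) * flipSign k Finset.univ h * flipSign k Finset.univ h *
      flipSign_mul_self (k := k) Finset.univ g +
      ((f c : ℤ) : k) * flipSign_mul_self (k := k) Finset.univ h
  rw [hsw, ← hsign, mul_smul, mul_smul]
  exact (((of_flip_mul_smodEq g _).trans ((of_mul_flip_smodEq h m).smul _)).smul _)

theorem sum_flipSign_smul_mem [NeZero (2 : k)] (hs : of k _ s ∈ signCorner C)
    (hw : of k _ w ∈ signCorner C) :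
    ∑ f, flipSign k Finset.univ f • of k _ (s * flip ι f * w) ∈ signCorner C := by
  have h := mul_mul_mem_cornerPreimage (isIdempotentElem_signIdempotent k _) hs hw
  have hsum : of k _ s * signIdempotent k Finset.univ * of k _ w =
      (Fintype.card (ι → ℤˣ) : k)⁻¹ •
        ∑ f, flipSign k Finset.univ f • of k _ (s * flip ι f * w) := by
    rw [signIdempotent, charIdempotent, mul_smul_comm, smul_mul_assoc, Finset.mul_sum,
      Finset.sum_mul]
    congr 1
    refine Finset.sum_congr rfl fun f _ => ?_
    rw [show f⁻¹ = f from funext fun i => Int.units_inv_eq_self (f i), mul_smul_comm,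
      smul_mul_assoc, map_mul, map_mul]
  rw [hsum] at h
  exact (Submodule.smul_mem_iff _ (inv_ne_zero (NeZero.ne _))).1 h

theorem of_mul_smodEq_of_mul_swap_partner_mul [NeZero (2 : k)] (hs : s ∈ supportedOn U)
    (hw : w ∈ supportedOn V) (hUV : U ∩ V ⊆ {x.1}) (hsC : of k _ s ∈ signCorner C)
    (hwC : of k _ w ∈ signCorner C) :
    of k _ (s * w) ≡ of k _ (s * swap x (partner x) * w) [SMOD signCorner C] := by
  let F (f : ι → ℤˣ) : MonoidAlgebra k (Perm (PairedPoint ι)) :=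
    ((f x.1 : ℤ) : k) • of k _ (s * flip ι (Pi.mulSingle x.1 (f x.1)) * w)
  have hF : ∑ f, F f ∈ signCorner C := by
    rw [← SModEq.zero]
    exact (SModEq.sum fun f _ => (flipSign_smul_of_mul_flip_mul_smodEq hs hw hUV f).symm).trans
      (SModEq.zero.2 (sum_flipSign_smul_mem hsC hwC))
  let τ : ι → ℤˣ := Pi.mulSingle x.1 (-1)
  have pair (f : ι → ℤˣ) : F f + F (τ * f) =
      of k _ (s * w) - of k _ (s * swap x (partner x) * w) := by
    rcases Int.units_eq_one_or (f x.1) with h | h <;>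
      simp [F, τ, h, ← flip_mulSingle, sub_eq_add_neg, add_comm]
  have reindex : ∑ f, F (τ * f) = ∑ f, F f := Equiv.sum_comp (Equiv.mulLeft τ) F
  have hsum : (2 : k) • ∑ f, F f = (Fintype.card (ι → ℤˣ) : k) •
      (of k _ (s * w) - of k _ (s * swap x (partner x) * w)) := by
    rw [Nat.cast_smul_eq_nsmul, ← Finset.card_univ, ← Finset.sum_const,
      ← Finset.sum_congr rfl fun f _ => pair f, Finset.sum_add_distrib, reindex, two_smul]
  rw [SModEq.sub_mem, ← Submodule.smul_mem_iff _ (NeZero.ne (Fintype.card (ι → ℤˣ) : k)), ← hsum]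
  exact Submodule.smul_mem _ _ hF

end SignCorner

section Generation

open MonoidAlgebra

theorem swap_mul_swap_mul_swap_eq {α : Type*} [DecidableEq α] {p p' q q' : α}
    (h : [p, p', q, q'].Nodup) :
    (swap p q * swap p' q') * swap p' q = swap p' q * (swap q q' * swap p p') := by
  ext t
  simp only [Perm.mul_apply, swap_apply_def]
  grind

theorem blockSwap_mul_swap_partner {ι : Type*} [DecidableEq ι] {x y : PairedPoint ι}
    (h : x.1 ≠ y.1) :
    blockSwap x y * swap (partner x) y =
      swap (partner x) y * (swap y (partner y) * swap x (partner x)) :=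
  swap_mul_swap_mul_swap_eq (nodup_pair h)

theorem swap_partner_mul_blockSwap {ι : Type*} [DecidableEq ι] {x y : PairedPoint ι}
    (h : x.1 ≠ y.1) :
    swap (partner x) y * blockSwap x y =
      swap x (partner x) * swap y (partner y) * swap (partner x) y := by
  have := congrArg (·⁻¹) (blockSwap_mul_swap_partner h)
  simpa only [mul_inv_rev, swap_inv, inv_eq_of_mul_eq_one_left (blockSwap_mul_self h)] using this

theorem swap_partner_mul_comm {ι : Type*} [DecidableEq ι] {V : Finset ι}
    {w : Perm (PairedPoint ι)} {x : PairedPoint ι} (hw : w ∈ supportedOn V) (hx : x.1 ∉ V) :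
    swap x (partner x) * w = w * swap x (partner x) := by
  rw [← flip_mulSingle]
  exact commute_flip hw fun i hi => Pi.mulSingle_eq_of_ne (fun h : i = x.1 => hx (h ▸ hi)) _

theorem blockSwap_mul_blockSwap_mul_blockSwap_mul {ι : Type*} [DecidableEq ι]
    {p q r : PairedPoint ι}
    (hpq : p.1 ≠ q.1) (hpr : p.1 ≠ r.1) (hqr : q.1 ≠ r.1) :
    blockSwap p q * blockSwap (partner p) r * blockSwap p q *
        (swap (partner p) q * swap (partner q) r) =
      swap q (partner q) * (swap r (partner r) * (swap p (partner p) *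
        (swap (partner p) q * swap (partner q) r * swap r (partner r) * blockSwap p q))) := by
  have h1 := nodup_pair hpq
  have h2 := nodup_pair hpr
  have h3 := nodup_pair hqr
  simp only [blockSwap, partner_partner]
  generalize partner p = p', partner q = q', partner r = r' at *
  simp only [List.nodup_cons, List.mem_cons, List.not_mem_nil, not_or, or_false, List.nodup_nil,
    not_false_eq_true, and_true] at h1 h2 h3
  ext1 t
  simp only [Perm.mul_apply, swap_apply_def]
  grind

variable {k : Type*} [Field k] [NeZero (2 : k)] {ι : Type*} [Fintype ι] [DecidableEq ι]
  {C : NonUnitalSubalgebra k (MonoidAlgebra k (Perm (PairedPoint ι)))}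
  {U V : Finset ι} {s w : Perm (PairedPoint ι)} {x y : PairedPoint ι}

theorem mem_of_smodEq_neg {a : MonoidAlgebra k (Perm (PairedPoint ι))}
    (h : a ≡ -a [SMOD signCorner C]) : a ∈ signCorner C := by
  rw [SModEq.sub_mem, sub_neg_eq_add, ← two_smul k] at h
  exact (Submodule.smul_mem_iff _ (NeZero.ne (2 : k))).1 h

theorem of_mul_mem_of_disjoint (hs : s ∈ supportedOn U) (hw : w ∈ supportedOn V)
    (hUV : Disjoint U V) (hsC : of k _ s ∈ signCorner C) (hwC : of k _ w ∈ signCorner C) :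
    of k _ (s * w) ∈ signCorner C := by
  rcases U.eq_empty_or_nonempty with rfl | ⟨c, hc⟩
  · obtain rfl : s = 1 := Equiv.ext fun x => mem_supportedOn.1 hs x (by simp)
    rwa [one_mul]
  · refine mem_of_smodEq_neg ?_
    refine (of_mul_smodEq_of_mul_swap_partner_mul (x := (c, 1)) hs hw ?_ hsC hwC).trans ?_
    · simp [Finset.disjoint_iff_inter_eq_empty.1 hUV]
    · rw [mul_assoc, swap_partner_mul_comm hw (Finset.disjoint_left.1 hUV hc), ← mul_assoc]
      exact of_mul_swap_partner_smodEq _ _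

variable (hlt : ∀ V : Finset ι, V.card < U.card → ∀ w ∈ supportedOn V, of k _ w ∈ signCorner C)
include hlt

theorem of_blockSwap_mul_smodEq (hU : 2 < U.card) (hw : w ∈ supportedOn U) (hx : w x = x)
    (hx' : w (partner x) = y) (h : x.1 ≠ y.1) :
    of k _ (blockSwap x y * w) ≡ -of k _ w [SMOD signCorner C] := by
  set s := swap (partner x) y with hs
  have hxU : x.1 ∈ U := fst_mem_of_apply_ne (x := partner x) hw (hx' ▸ (ne_of_fst_ne h.symm))
  have hyU : y.1 ∈ U := hx' ▸ apply_fst_mem (x := partner x) hw hxU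
  have hsU : s ∈ supportedOn {x.1, y.1} := swap_mem_supportedOn (by simp) (by simp)
  have hsw : s * w ∈ supportedOn (U.erase x.1) :=
    mem_supportedOn_erase (mul_mem (swap_mem_supportedOn hxU hyU) hw)
      (by simp [hx, hs, swap_apply_of_ne_of_ne (partner_ne x).symm (ne_of_fst_ne h)])
      (by simp [hx', hs])
  have hB : blockSwap x y * w = s * swap y (partner y) * (s * w) * swap x (partner x) := by
    have hBs := blockSwap_mul_swap_partner h
    rw [← hs] at hBs
    rw [mul_assoc _ (s * w), ← swap_partner_mul_comm hsw (U.notMem_erase x.1), ← mul_assoc,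
      mul_assoc s, ← hBs, mul_assoc, ← mul_assoc s, hs, swap_mul_self, one_mul]
  rw [hB]
  refine (of_mul_swap_partner_smodEq _ _).trans (.neg ?_)
  have hC1 := hlt _ (Finset.card_le_two.trans_lt hU) s hsU
  have hC2 := hlt _ (Finset.card_erase_lt_of_mem hxU) _ hsw
  have := of_mul_smodEq_of_mul_swap_partner_mul (x := y) hsU hsw (by grind) hC1 hC2
  rw [← mul_assoc s s, hs, swap_mul_self, one_mul] at this
  exact this.symm

theorem of_mul_blockSwap_smodEq (hU : 2 < U.card) (hw : w ∈ supportedOn U) (hx : w x = x)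
    (hy : w y = partner x) (h : x.1 ≠ y.1) :
    of k _ (w * blockSwap x y) ≡ -of k _ w [SMOD signCorner C] := by
  set s := swap (partner x) y with hs
  have hyU : y.1 ∈ U := fst_mem_of_apply_ne hw (hy ▸ ne_of_fst_ne h)
  have hxU : x.1 ∈ U := congrArg Prod.fst hy ▸ apply_fst_mem hw hyU
  have hsU : s ∈ supportedOn {x.1, y.1} := swap_mem_supportedOn (by simp) (by simp)
  have hws : w * s ∈ supportedOn (U.erase x.1) :=
    mem_supportedOn_erase (mul_mem hw (swap_mem_supportedOn hxU hyU))
      (by simp [hx, hs, swap_apply_of_ne_of_ne (partner_ne x).symm (ne_of_fst_ne h)])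
      (by simp [hy, hs])
  have hB : w * blockSwap x y = swap x (partner x) * (w * s * swap y (partner y) * s) := by
    have hsB := swap_partner_mul_blockSwap h
    rw [← hs] at hsB
    rw [mul_assoc (w * s), ← mul_assoc _ (w * s), swap_partner_mul_comm hws (U.notMem_erase x.1),
      mul_assoc (w * s), ← mul_assoc (swap x _), ← hsB, mul_assoc, ← mul_assoc s, hs,
      swap_mul_self, one_mul]
  rw [hB]
  refine (of_swap_partner_mul_smodEq _ _).trans (.neg ?_)
  have hC1 := hlt _ (Finset.card_le_two.trans_lt hU) s hsU
  have hC2 := hlt _ (Finset.card_erase_lt_of_mem hxU) _ hws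
  have := of_mul_smodEq_of_mul_swap_partner_mul (x := y) hws hsU (by grind) hC2 hC1
  rw [mul_assoc w s s, hs, swap_mul_self, mul_one] at this
  exact this.symm

omit [NeZero (2 : k)] in
theorem of_blockSwap_mem (hU : 2 < U.card) (x y : PairedPoint ι) :
    of k _ (blockSwap x y) ∈ signCorner C :=
  hlt _ (Finset.card_le_two.trans_lt hU) _
    (blockSwap_mem_supportedOn (U := {x.1, y.1}) (by simp) (by simp))

theorem of_blockSwap_partner_mul_smodEq (hU : 2 < U.card) (hw : w ∈ supportedOn U)
    {p q r : PairedPoint ι} (hpq : p.1 ≠ q.1) (hpr : p.1 ≠ r.1) (hq : w q = partner p)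
    (hq' : w (partner q) = r) :
    of k _ (blockSwap (partner p) r * w) ≡ -of k _ w [SMOD signCorner C] := by
  set B := blockSwap (partner p) q with hB
  have hqU : q.1 ∈ U := fst_mem_of_apply_ne hw (hq ▸ ne_of_fst_ne hpq)
  have hpU : p.1 ∈ U := congrArg Prod.fst hq ▸ apply_fst_mem hw hqU
  have hnd := nodup_pair hpq
  have hBp : B (partner p) = q := by
    simp only [hB, blockSwap, Perm.mul_apply, swap_apply_def, partner_partner]
    grind
  have hBp' : B p = partner q := by
    simp only [hB, blockSwap, Perm.mul_apply, swap_apply_def, partner_partner]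
    grind
  have h := of_blockSwap_mul_smodEq (k := k) (C := C) (x := partner p) (y := r) hlt hU
    (mul_mem hw (blockSwap_mem_supportedOn (x := partner p) hpU hqU)) (by simp [← hB, hBp, hq])
    (by simp [← hB, hBp', hq']) hpr
  have := mul_of_blockSwap_congr (x := partner p) hpq (of_blockSwap_mem hlt hU _ _) h
  rwa [neg_mul, ← map_mul, ← map_mul, mul_assoc _ (_ * _), mul_assoc w,
    blockSwap_mul_self (x := partner p) hpq, mul_one] at this

omit [Fintype ι] hlt in
theorem exists_eq_swap_mul_swap_mul (hw : w ∈ supportedOn U) {p q r : PairedPoint ι}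
    (hpq : p.1 ≠ q.1) (hpr : p.1 ≠ r.1) (hqr : q.1 ≠ r.1) (hp : w p = p) (hp' : w (partner p) = q)
    (hq : w q = partner p) (hq' : w (partner q) = r) :
    ∃ x ∈ supportedOn ((U.erase p.1).erase q.1),
      w = swap (partner p) q * swap (partner q) r * x := by
  set z := swap (partner p) q * swap (partner q) r with hz
  have h1 := nodup_pair hpq
  have h2 := nodup_pair hpr
  have h3 := nodup_pair hqr
  have hzp : z p = p ∧ z (partner p) = q ∧ z q = partner p ∧ z (partner q) = r := by
    simp only [hz, Perm.mul_apply, swap_apply_def]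
    grind
  have hx {y : PairedPoint ι} (h : w y = z y) : (z⁻¹ * w) y = y := by
    rw [Perm.mul_apply, h, Perm.inv_def, symm_apply_apply]
  have hpU : p.1 ∈ U := fst_mem_of_apply_ne (x := partner p) hw (hp' ▸ ne_of_fst_ne hpq.symm)
  have hqU : q.1 ∈ U := fst_mem_of_apply_ne hw (hq ▸ ne_of_fst_ne hpq)
  have hrU : r.1 ∈ U := hq' ▸ apply_fst_mem (x := partner q) hw hqU
  have hzU : z ∈ supportedOn U :=
    mul_mem (swap_mem_supportedOn hpU hqU) (swap_mem_supportedOn hqU hrU)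
  refine ⟨z⁻¹ * w, ?_, (mul_inv_cancel_left z w).symm⟩
  exact mem_supportedOn_erase (mem_supportedOn_erase (mul_mem (inv_mem hzU) hw)
    (hx (hp.trans hzp.1.symm)) (hx (hp'.trans hzp.2.1.symm)))
    (hx (hq.trans hzp.2.2.1.symm)) (hx (hq'.trans hzp.2.2.2.symm))

section Chain

variable (hU : 3 < U.card) (hw : w ∈ supportedOn U) {p q r : PairedPoint ι}
  (hpq : p.1 ≠ q.1) (hpr : p.1 ≠ r.1) (hqr : q.1 ≠ r.1) (hp : w p = p) (hp' : w (partner p) = q)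
  (hq : w q = partner p) (hq' : w (partner q) = r)
include hU hw hpq hpr hp hp' hq hq'

theorem of_blockSwap_mul_three_smodEq_neg :
    of k _ (blockSwap p q * blockSwap (partner p) r * blockSwap p q * w) ≡ -of k _ w
      [SMOD signCorner C] := by
  have hU2 : 2 < U.card := by lia
  set S := blockSwap p q with hS
  set S' := blockSwap (partner p) r with hS'
  have hSw : of k _ (S * w) ≡ -of k _ w [SMOD signCorner C] :=
    of_blockSwap_mul_smodEq hlt hU2 hw hp hp' hpq
  have hS'w : of k _ (S' * w) ≡ -of k _ w [SMOD signCorner C] :=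
    of_blockSwap_partner_mul_smodEq hlt hU2 hw hpq hpr hq hq'
  have hS'Sw := of_blockSwap_mul_congr (x := partner p) hpr (of_blockSwap_mem hlt hU2 _ r) hSw
  rw [← hS', mul_neg, ← map_mul, ← map_mul] at hS'Sw
  have hSS'Sw := of_blockSwap_mul_congr hpq (of_blockSwap_mem hlt hU2 p q) (hS'Sw.trans hS'w.neg)
  rw [neg_neg, ← hS, ← map_mul, ← map_mul, ← mul_assoc, ← mul_assoc] at hSS'Sw
  exact hSS'Sw.trans hSw

include hqr

theorem of_blockSwap_mul_three_smodEq :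
    of k _ (blockSwap p q * blockSwap (partner p) r * blockSwap p q * w) ≡ of k _ w
      [SMOD signCorner C] := by
  have hU2 : 2 < U.card := by lia
  obtain ⟨x, hx, rfl⟩ := exists_eq_swap_mul_swap_mul hw hpq hpr hqr hp hp' hq hq'
  set S := blockSwap p q with hS
  set z := swap (partner p) q * swap (partner q) r with hz
  have hzU : z ∈ supportedOn {p.1, q.1, r.1} :=
    mul_mem (swap_mem_supportedOn (by simp) (by simp)) (swap_mem_supportedOn (by simp) (by simp))
  have hzC : of k _ z ∈ signCorner C := hlt _ (Finset.card_le_three.trans_lt hU) _ hzU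
  have hpU : p.1 ∈ U := fst_mem_of_apply_ne (x := partner p) hw (hp' ▸ ne_of_fst_ne hpq.symm)
  have hxC : of k _ x ∈ signCorner C :=
    hlt _ ((Finset.card_erase_le).trans_lt (Finset.card_erase_lt_of_mem hpU)) _ hx
  have hSx : Commute S x := commute_of_disjoint
    (blockSwap_mem_supportedOn (U := {p.1, q.1}) (by simp) (by simp)) hx (by simp)
  have hflips : S * blockSwap (partner p) r * S * (z * x) = swap q (partner q) *
      (swap r (partner r) * (swap p (partner p) * (z * swap r (partner r) * x * S))) := by
    rw [← mul_assoc, blockSwap_mul_blockSwap_mul_blockSwap_mul hpq hpr hqr]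
    simp only [mul_assoc, ← hS, ← hz, hSx.eq]
  have hmerge := mul_of_blockSwap_congr hpq (of_blockSwap_mem hlt hU2 p q)
    (of_mul_smodEq_of_mul_swap_partner_mul (x := r) hzU hx (by grind) hzC hxC)
  rw [← map_mul, ← map_mul] at hmerge
  have hzxS := hmerge.symm.trans (of_mul_blockSwap_smodEq hlt hU2 hw hp hq hpq)
  rw [hflips]
  refine (of_swap_partner_mul_smodEq _ _).trans ?_
  refine ((of_swap_partner_mul_smodEq _ _).trans (of_swap_partner_mul_smodEq _ _).neg).neg.trans ?_
  rw [neg_neg, ← neg_neg (of k _ (z * x))]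
  exact hzxS.neg

theorem of_mem_of_apply_eq : of k _ w ∈ signCorner C :=
  mem_of_smodEq_neg <|
    (of_blockSwap_mul_three_smodEq hlt hU hw hpq hpr hqr hp hp' hq hq').symm.trans
      (of_blockSwap_mul_three_smodEq_neg hlt hU hw hpq hpr hp hp' hq hq')

end Chain

omit [NeZero (2 : k)] hlt in
theorem mem_of_smodEq_neg_of_mem {a b : MonoidAlgebra k (Perm (PairedPoint ι))}
    (h : a ≡ -b [SMOD signCorner C]) (ha : a ∈ signCorner C) : b ∈ signCorner C := by
  rw [← SModEq.zero] at *
  simpa using (h.symm.trans ha).neg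

theorem exists_apply_eq_and_forall_mem (hU : 2 < U.card) (x y : PairedPoint ι) :
    ∃ g ∈ supportedOn {x.1, y.1}, g x = y ∧ ∀ w,
      (of k _ (g * w) ∈ signCorner C → of k _ w ∈ signCorner C) ∧
      (of k _ (w * g) ∈ signCorner C → of k _ w ∈ signCorner C) := by
  by_cases h : x.1 = y.1
  · rcases eq_or_eq_partner h with rfl | rfl
    · exact ⟨1, one_mem _, rfl, by simp⟩
    · refine ⟨swap y (partner y), swap_mem_supportedOn (by simp) (by simp), by simp, fun w => ?_⟩
      exact ⟨mem_of_smodEq_neg_of_mem (of_swap_partner_mul_smodEq y w),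
        mem_of_smodEq_neg_of_mem (of_mul_swap_partner_smodEq y w)⟩
  · have hB : of k _ (blockSwap x y) ∈ signCorner C := of_blockSwap_mem hlt hU x y
    have he := commute_blockSwap_signIdempotent k h
    refine ⟨blockSwap x y, blockSwap_mem_supportedOn (by simp) (by simp), ?_, fun w => ⟨?_, ?_⟩⟩
    · have := nodup_pair h
      simp only [blockSwap, Perm.mul_apply, swap_apply_def]
      grind
    · intro hw
      have := mul_mem_cornerPreimage_of_commute_left (isIdempotentElem_signIdempotent k _) hB he hw
      rwa [← map_mul, ← mul_assoc, blockSwap_mul_self h, one_mul] at this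
    · intro hw
      have := mul_mem_cornerPreimage_of_commute_right (isIdempotentElem_signIdempotent k _) hw hB he
      rwa [← map_mul, mul_assoc, blockSwap_mul_self h, mul_one] at this

theorem of_mem_of_apply_apply_partner_eq (hU : 3 < U.card) (hw : w ∈ supportedOn U)
    {p q : PairedPoint ι} (hpq : p.1 ≠ q.1) (hp : w p = p) (hp' : w (partner p) = q)
    (hq : w q = partner p) : of k _ w ∈ signCorner C := by
  have hnd := nodup_pair hpq
  by_cases hq' : w (partner q) = partner q
  · have hpU : p.1 ∈ U := fst_mem_of_apply_ne (x := partner p) hw (hp' ▸ ne_of_fst_ne hpq.symm)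
    have hqU : q.1 ∈ U := fst_mem_of_apply_ne hw (hq ▸ ne_of_fst_ne hpq)
    set s := swap (partner p) q with hs
    have hsU : s ∈ supportedOn {p.1, q.1} := swap_mem_supportedOn (by simp) (by simp)
    have hsw : s * w ∈ supportedOn ((U.erase p.1).erase q.1) := by
      refine mem_supportedOn_erase (mem_supportedOn_erase
        (mul_mem (swap_mem_supportedOn (x := partner p) hpU hqU) hw) ?_ ?_) ?_ ?_ <;>
      · simp only [Perm.mul_apply, hp, hp', hq, hq', hs, swap_apply_def]
        grind
    have := of_mul_mem_of_disjoint hsU hsw (by simp)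
      (hlt _ (Finset.card_le_two.trans_lt (by lia)) s hsU)
      (hlt _ (Finset.card_erase_le.trans_lt (Finset.card_erase_lt_of_mem hpU)) _ hsw)
    rwa [← mul_assoc, hs, swap_mul_self, one_mul] at this
  · have hpr : p.1 ≠ (w (partner q)).1 := fst_ne_of_ne_of_ne_partner
      ((w.injective.ne (ne_of_fst_ne (x := partner q) hpq.symm)).trans_eq hp)
      ((w.injective.ne (partner_ne q)).trans_eq hq)
    have hqr : q.1 ≠ (w (partner q)).1 := fst_ne_of_ne_of_ne_partner
      ((w.injective.ne (ne_of_fst_ne (x := partner q) (y := partner p) hpq.symm)).trans_eq hp') hq'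
    exact of_mem_of_apply_eq hlt hU hw hpq hpr hqr hp hp' hq rfl

theorem of_mem_of_apply_self (hU : 3 < U.card) (hw : w ∈ supportedOn U) {p : PairedPoint ι}
    (hpU : p.1 ∈ U) (hp : w p = p) : of k _ w ∈ signCorner C := by
  by_cases hp' : w (partner p) = partner p
  · exact hlt _ (Finset.card_erase_lt_of_mem hpU) w (mem_supportedOn_erase hw hp hp')
  · set q := w (partner p)
    obtain ⟨y, hy⟩ := w.surjective (partner p)
    have hpq : p.1 ≠ q.1 :=
      fst_ne_of_ne_of_ne_partner ((w.injective.ne (partner_ne p)).trans_eq hp) hp'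
    have hpy : p.1 ≠ y.1 := fst_ne_of_ne_of_ne_partner
      (fun h => partner_ne p (hy.symm.trans ((congrArg w h).trans hp)))
      fun h => hp' ((congrArg w h).symm.trans hy)
    obtain ⟨g, hg, hgq, hmem⟩ := exists_apply_eq_and_forall_mem (k := k) (C := C) hlt (by lia) q y
    have hpg : p.1 ∉ ({q.1, y.1} : Finset ι) := by simp [hpq, hpy]
    have hqU : q.1 ∈ U := apply_fst_mem (x := partner p) hw hpU
    have hyU : y.1 ∈ U := fst_mem_of_apply_ne hw (hy ▸ ne_of_fst_ne hpy)
    have hgU : g ∈ supportedOn U :=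
      supportedOn_mono (Finset.insert_subset hqU (Finset.singleton_subset_iff.2 hyU)) hg
    refine (hmem w).2 (of_mem_of_apply_apply_partner_eq hlt hU (mul_mem hw hgU) hpq ?_ ?_ ?_)
    · rw [Perm.mul_apply, mem_supportedOn.1 hg p hpg, hp]
    · rw [Perm.mul_apply, mem_supportedOn.1 hg (partner p) hpg]
    · rw [Perm.mul_apply, hgq, hy]

omit hlt in
theorem of_mem_of_forall_card_le_three
    (h3 : ∀ V : Finset ι, V.card ≤ 3 → ∀ w ∈ supportedOn V, of k _ w ∈ signCorner C) :
    ∀ U : Finset ι, ∀ w ∈ supportedOn U, of k _ w ∈ signCorner C := by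
  intro U
  induction hn : U.card using Nat.strong_induction_on generalizing U with | _ n ih
  intro w hw
  have hlt (V : Finset ι) (hV : V.card < U.card) := ih V.card (hn ▸ hV) V rfl
  by_cases hU : U.card ≤ 3
  · exact h3 U hU w hw
  · rw [not_le] at hU
    obtain ⟨i, hi⟩ := Finset.card_pos.1 (by lia : 0 < U.card)
    let p : PairedPoint ι := (i, 1)
    have hwi : (w p).1 ∈ U := apply_fst_mem (x := p) hw hi
    obtain ⟨g, hg, hgp, hmem⟩ :=
      exists_apply_eq_and_forall_mem (k := k) (C := C) hlt (by lia) (w p) p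
    have hgU : g ∈ supportedOn U :=
      supportedOn_mono (Finset.insert_subset hwi (Finset.singleton_subset_iff.2 hi)) hg
    exact (hmem w).1 (of_mem_of_apply_self (p := p) hlt hU (mul_mem hgU hw) hi hgp)

end Generation

end PairedPoint

section Centralizer

open MulOpposite

variable {k A Z : Type*} [CommRing k] [Ring A] [Algebra k A] [AddCommGroup Z] [Module k Z]
  [Module A Z] [Module Aᵐᵒᵖ Z] [SMulCommClass A Aᵐᵒᵖ Z] [IsScalarTower k A Z]
  [IsScalarTower k Aᵐᵒᵖ Z]

variable (k A) in
/-- The elements of `A` acting in the same way on `z` from the left and from the right, where a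
bimodule is encoded by commuting actions of `A` and `Aᵐᵒᵖ`. -/
def bimoduleCentralizer (z : Z) : Subalgebra k A where
  carrier := {a | a • z = op a • z}
  mul_mem' {a b} (ha : a • z = op a • z) (hb : b • z = op b • z) := by
    rw [Set.mem_ofPred_eq, mul_smul, hb, smul_comm, ha, smul_smul, op_mul]
  add_mem' {a b} (ha : a • z = op a • z) (hb : b • z = op b • z) := by
    rw [Set.mem_ofPred_eq, add_smul, op_add, add_smul, ha, hb]
  algebraMap_mem' c := by
    rw [Set.mem_ofPred_eq, algebraMap_smul, Algebra.algebraMap_eq_smul_one, op_smul, smul_assoc,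
      op_one, one_smul]

theorem mem_bimoduleCentralizer {a : A} {z : Z} :
    a ∈ bimoduleCentralizer k A z ↔ a • z = op a • z := Iff.rfl

theorem mul_mul_mem_bimoduleCentralizer_smul {e a : A} {z : Z} (he : IsIdempotentElem e)
    (hez : e ∈ bimoduleCentralizer k A z) (ha : a ∈ bimoduleCentralizer k A z) :
    e * a * e ∈ bimoduleCentralizer k A (e • z) :=
  calc (e * a * e) • e • z = (e * a * e) • z := by rw [smul_smul, mul_assoc, he.eq]
    _ = op (e * a * e) • z := mul_mem (mul_mem hez ha) hez
    _ = op (e * a * e) • e • z := by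
      rw [mem_bimoduleCentralizer.1 hez, smul_smul, ← op_mul, ← mul_assoc, ← mul_assoc, he.eq]

theorem bimoduleCentralizer_le_smul (c : k) (z : Z) :
    bimoduleCentralizer k A z ≤ bimoduleCentralizer k A (c • z) := fun a ha => by
  rw [mem_bimoduleCentralizer] at *
  rw [smul_algebra_smul_comm, ha, smul_algebra_smul_comm]

end Centralizer

/-- Functions of a word in `α` and a word in `β`, both with positions in `X`. Permutations of `X`
act from the left through the first word and from the right through the second. -/
def BiwordFunction (X α β M : Type*) : Type _ := (X → α) → (X → β) → M

namespace BiwordFunction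

open MulOpposite MonoidAlgebra

variable {k X α β M M' : Type*} [Field k] [AddCommGroup M] [Module k M] [AddCommGroup M']
  [Module k M']

instance : AddCommGroup (BiwordFunction X α β M) :=
  inferInstanceAs (AddCommGroup ((X → α) → (X → β) → M))

instance : Module k (BiwordFunction X α β M) :=
  inferInstanceAs (Module k ((X → α) → (X → β) → M))

theorem smul_apply (c : k) (F : BiwordFunction X α β M) (u : X → α) (v : X → β) :
    (c • F) u v = c • F u v := rfl

theorem sum_apply {σ : Type*} (s : Finset σ) (F : σ → BiwordFunction X α β M) (u : X → α)
    (v : X → β) : (∑ i ∈ s, F i) u v = ∑ i ∈ s, F i u v :=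
  (congrFun (Finset.sum_apply u s F) v).trans (Finset.sum_apply v s fun i => F i u)

variable (k X α β M) in
/-- The action of permutations of the positions on the first word. -/
def precompLeft : Perm X →* Module.End k (BiwordFunction X α β M) where
  toFun g :=
    { toFun := fun F u v => F (u ∘ g) v
      map_add' := fun _ _ => rfl
      map_smul' := fun _ _ => rfl }
  map_one' := rfl
  map_mul' _ _ := rfl

variable (k X α β M) in
/-- The action of permutations of the positions on the second word. The inverse makes a diagonal
change of positions correspond to equality of the left and right actions. -/
def precompRight : Perm X →* (Module.End k (BiwordFunction X α β M))ᵐᵒᵖ where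
  toFun g := op
    { toFun := fun F u v => F u (v ∘ (g⁻¹ : Perm X))
      map_add' := fun _ _ => rfl
      map_smul' := fun _ _ => rfl }
  map_one' := rfl
  map_mul' _ _ := rfl

noncomputable instance : Module (MonoidAlgebra k (Perm X)) (BiwordFunction X α β M) :=
  Module.compHom _ (lift k _ _ (precompLeft k X α β M)).toRingHom

noncomputable instance : Module (MonoidAlgebra k (Perm X))ᵐᵒᵖ (BiwordFunction X α β M) :=
  Module.compHom _ (AlgHom.opComm (lift k _ _ (precompRight k X α β M))).toRingHom

instance : IsScalarTower k (MonoidAlgebra k (Perm X)) (BiwordFunction X α β M) where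
  smul_assoc c a F :=
    congrFun (congrArg DFunLike.coe (map_smul (lift k _ _ (precompLeft k X α β M)) c a)) F

instance : IsScalarTower k (MonoidAlgebra k (Perm X))ᵐᵒᵖ (BiwordFunction X α β M) where
  smul_assoc c a F :=
    congrFun (congrArg DFunLike.coe
      (map_smul (AlgHom.opComm (lift k _ _ (precompRight k X α β M))) c a)) F

variable (k) in
theorem of_smul_apply (g : Perm X) (F : BiwordFunction X α β M) (u : X → α) (v : X → β) :
    (of k _ g • F) u v = F (u ∘ g) v :=
  congrFun (congrFun (congrFun (congrArg DFunLike.coe (lift_of (precompLeft k X α β M) g)) F) u) v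

variable (k) in
theorem op_of_smul_apply (g : Perm X) (F : BiwordFunction X α β M) (u : X → α) (v : X → β) :
    (op (of k _ g) • F) u v = F u (v ∘ (g⁻¹ : Perm X)) :=
  congrFun (congrFun (congrFun (congrArg (fun f => DFunLike.coe (unop f))
    (lift_of (precompRight k X α β M) g)) F) u) v

instance : SMulCommClass (MonoidAlgebra k (Perm X)) (MonoidAlgebra k (Perm X))ᵐᵒᵖ
    (BiwordFunction X α β M) where
  smul_comm a b F := by
    induction b using MulOpposite.rec' with | _ b
    induction a using MonoidAlgebra.induction_on with
    | of g =>
      induction b using MonoidAlgebra.induction_on with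
      | of h =>
        funext u v
        rw [of_smul_apply, op_of_smul_apply, op_of_smul_apply, of_smul_apply]
      | add b b' hb hb' => simp only [op_add, add_smul, smul_add, hb, hb']
      | smul c b hb => rw [op_smul, smul_assoc, smul_comm _ c, hb, smul_assoc]
    | add a a' ha ha' => simp only [add_smul, smul_add, ha, ha']
    | smul c a ha => rw [smul_assoc, ha, smul_assoc, smul_comm _ c]

/-- Composition with a linear map on the values. -/
def map (φ : M →ₗ[k] M') : BiwordFunction X α β M →ₗ[k] BiwordFunction X α β M' where
  toFun F u v := φ (F u v)
  map_add' F G := by funext u v; exact map_add φ _ _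
  map_smul' c F := by funext u v; exact map_smul φ c _

@[simp]
theorem map_apply (φ : M →ₗ[k] M') (F : BiwordFunction X α β M) (u : X → α) (v : X → β) :
    map φ F u v = φ (F u v) := rfl

theorem map_smul_left (φ : M →ₗ[k] M') (a : MonoidAlgebra k (Perm X))
    (F : BiwordFunction X α β M) : map φ (a • F) = a • map φ F := by
  induction a using MonoidAlgebra.induction_on with
  | of g => funext u v; simp only [map_apply, of_smul_apply]
  | add a b ha hb => simp only [add_smul, map_add, ha, hb]
  | smul c a ha => simp only [smul_assoc, map_smul, ha]

theorem map_smul_right (φ : M →ₗ[k] M') (a : MonoidAlgebra k (Perm X))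
    (F : BiwordFunction X α β M) : map φ (op a • F) = op a • map φ F := by
  induction a using MonoidAlgebra.induction_on with
  | of g => funext u v; simp only [map_apply, op_of_smul_apply]
  | add a b ha hb => simp only [op_add, add_smul, map_add, ha, hb]
  | smul c a ha => simp only [op_smul, smul_assoc, map_smul, ha]

theorem smul_apply_mem {N : Submodule k M} {F : BiwordFunction X α β M}
    (hF : ∀ u v, F u v ∈ N) (a : MonoidAlgebra k (Perm X)) (u : X → α) (v : X → β) :
    (a • F) u v ∈ N := by
  induction a using MonoidAlgebra.induction_on with
  | of g => rw [of_smul_apply]; exact hF _ _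
  | add a b ha hb => rw [add_smul]; exact N.add_mem ha hb
  | smul c a ha => rw [smul_assoc]; exact N.smul_mem c ha

theorem op_smul_apply_mem {N : Submodule k M} {F : BiwordFunction X α β M}
    (hF : ∀ u v, F u v ∈ N) (a : MonoidAlgebra k (Perm X)) (u : X → α) (v : X → β) :
    (op a • F) u v ∈ N := by
  induction a using MonoidAlgebra.induction_on with
  | of g => rw [op_of_smul_apply]; exact hF _ _
  | add a b ha hb => rw [op_add, add_smul]; exact N.add_mem ha hb
  | smul c a ha => rw [op_smul, smul_assoc]; exact N.smul_mem c ha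

section MulRight

variable {k X α β R : Type*} [Field k] [CommRing R] [Algebra k R]

variable (k) in
/-- Pointwise multiplication by `G`. -/
def mulRight (G : BiwordFunction X α β R) :
    BiwordFunction X α β R →ₗ[k] BiwordFunction X α β R where
  toFun F u v := F u v * G u v
  map_add' F F' := by funext u v; exact add_mul _ _ _
  map_smul' c F := by funext u v; exact smul_mul_assoc c _ _

@[simp]
theorem mulRight_apply (F G : BiwordFunction X α β R) (u : X → α) (v : X → β) :
    mulRight k G F u v = F u v * G u v := rfl

theorem of_smul_mulRight {g : Perm X} {c : k} {G : BiwordFunction X α β R}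
    (hG : of k _ g • G = c • G) (F : BiwordFunction X α β R) :
    of k _ g • mulRight k G F = c • mulRight k G (of k _ g • F) := by
  funext u v
  have h : G (u ∘ g) v = c • G u v :=
    (of_smul_apply k g G u v).symm.trans (congrFun (congrFun hG u) v)
  rw [of_smul_apply, mulRight_apply, h, mul_smul_comm]
  exact congrArg (fun p => c • (p * G u v)) (of_smul_apply k g F u v).symm

theorem op_of_smul_mulRight {g : Perm X} {c : k} {G : BiwordFunction X α β R}
    (hG : op (of k _ g) • G = c • G) (F : BiwordFunction X α β R) :
    op (of k _ g) • mulRight k G F = c • mulRight k G (op (of k _ g) • F) := by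
  funext u v
  have h : G u (v ∘ (g⁻¹ : Perm X)) = c • G u v :=
    (op_of_smul_apply k g G u v).symm.trans (congrFun (congrFun hG u) v)
  rw [op_of_smul_apply, mulRight_apply, h, mul_smul_comm]
  exact congrArg (fun p => c • (p * G u v)) (op_of_smul_apply k g F u v).symm

end MulRight

end BiwordFunction

section SignedVariable

variable (k : Type*) [CommRing k] {m n : ℕ}

theorem minorPresentation_X (t : ℕ) (p : MinorIndex t m n) :
    minorPresentation k t m n (X p) = genericMinor k m n t p.1.1 p.1.2 p.2.1 p.2.2 :=
  aeval_X _ _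

/-- The index of the `2`-minor with rows `a`, `b` and columns `c`, `e`. -/
def pairIndex {a b : Fin m} {c e : Fin n} (hab : a ≠ b) (hce : c ≠ e) : MinorIndex 2 m n :=
  ⟨({a, b}, {c, e}), Finset.card_pair hab, Finset.card_pair hce⟩

theorem pairIndex_swap_left {a b : Fin m} {c e : Fin n} (hab : a ≠ b) (hce : c ≠ e) :
    pairIndex hab.symm hce = pairIndex hab hce :=
  Subtype.ext (Prod.ext (Finset.pair_comm b a) rfl)

theorem pairIndex_swap_right {a b : Fin m} {c e : Fin n} (hab : a ≠ b) (hce : c ≠ e) :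
    pairIndex hab hce.symm = pairIndex hab hce :=
  Subtype.ext (Prod.ext rfl (Finset.pair_comm e c))

/-- The indeterminate of the `2`-minor with ordered rows `a`, `b` and ordered columns `c`, `e`:
alternating in the rows and in the columns, and zero if there is a repetition. -/
noncomputable def signedVariable (a b : Fin m) (c e : Fin n) :
    MvPolynomial (MinorIndex 2 m n) k :=
  if h : a ≠ b ∧ c ≠ e then
    Int.sign ((b : ℕ) - (a : ℕ)) • Int.sign ((e : ℕ) - (c : ℕ)) • X (pairIndex h.1 h.2)
  else 0

theorem signedVariable_swap_left (a b : Fin m) (c e : Fin n) :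
    signedVariable k b a c e = -signedVariable k a b c e := by
  by_cases h : a ≠ b ∧ c ≠ e
  · rw [signedVariable, signedVariable, dif_pos h, dif_pos ⟨h.1.symm, h.2⟩, ← neg_sub ((b : ℕ) : ℤ),
      Int.sign_neg, neg_smul, pairIndex_swap_left h.1 h.2]
  · rw [signedVariable, signedVariable, dif_neg h, dif_neg fun h' => h ⟨h'.1.symm, h'.2⟩, neg_zero]

theorem signedVariable_swap_right (a b : Fin m) (c e : Fin n) :
    signedVariable k a b e c = -signedVariable k a b c e := by
  by_cases h : a ≠ b ∧ c ≠ e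
  · rw [signedVariable, signedVariable, dif_pos h, dif_pos ⟨h.1, h.2.symm⟩, ← neg_sub ((e : ℕ) : ℤ),
      Int.sign_neg, neg_smul, smul_neg, pairIndex_swap_right h.1 h.2]
  · rw [signedVariable, signedVariable, dif_neg h, dif_neg fun h' => h ⟨h'.1, h'.2.symm⟩, neg_zero]

theorem signedVariable_of_lt {a b : Fin m} {c e : Fin n} (hab : a < b) (hce : c < e) :
    signedVariable k a b c e = X (pairIndex hab.ne hce.ne) := by
  rw [signedVariable, dif_pos ⟨hab.ne, hce.ne⟩,
    Int.sign_eq_one_of_pos (sub_pos.2 (Int.ofNat_lt.2 hab)),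
    Int.sign_eq_one_of_pos (sub_pos.2 (Int.ofNat_lt.2 hce)), one_smul, one_smul]

theorem totalDegree_signedVariable_le [Nontrivial k] (a b : Fin m) (c e : Fin n) :
    (signedVariable k a b c e).totalDegree ≤ 1 := by
  rw [signedVariable]
  split_ifs with h
  · exact (totalDegree_smul_le _ _).trans ((totalDegree_smul_le _ _).trans (totalDegree_X _).le)
  · simp

theorem exists_lt_eq_pair_of_card_eq_two {α : Type*} [LinearOrder α] {s : Finset α}
    (hs : s.card = 2) : ∃ a b, a < b ∧ s = {a, b} := by
  obtain ⟨a, b, hab, rfl⟩ := Finset.card_eq_two.1 hs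
  rcases hab.lt_or_gt with h | h
  · exact ⟨a, b, h, rfl⟩
  · exact ⟨b, a, h, Finset.pair_comm a b⟩

theorem exists_X_eq_signedVariable (p : MinorIndex 2 m n) :
    ∃ a b c e, (X p : MvPolynomial (MinorIndex 2 m n) k) = signedVariable k a b c e := by
  obtain ⟨⟨I, J⟩, hI, hJ⟩ := p
  obtain ⟨a, b, hab, rfl⟩ := exists_lt_eq_pair_of_card_eq_two hI
  obtain ⟨c, e, hce, rfl⟩ := exists_lt_eq_pair_of_card_eq_two hJ
  exact ⟨a, b, c, e, (signedVariable_of_lt k hab hce).symm⟩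

theorem orderEmbOfFin_pair {α : Type*} [LinearOrder α] {a b : α} (hab : a < b)
    (h : ({a, b} : Finset α).card = 2) : ⇑(Finset.orderEmbOfFin {a, b} h) = ![a, b] :=
  (Finset.orderEmbOfFin_unique h (by simp [Fin.forall_fin_two])
    fun i j hij => by fin_cases i <;> fin_cases j <;> simp_all).symm

theorem genericMinor_pair {a b : Fin m} {c e : Fin n} (hab : a < b) (hce : c < e)
    (hI : ({a, b} : Finset (Fin m)).card = 2) (hJ : ({c, e} : Finset (Fin n)).card = 2) :
    genericMinor k m n 2 {a, b} {c, e} hI hJ = X (a, c) * X (b, e) - X (a, e) * X (b, c) := by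
  simp [genericMinor, Matrix.det_fin_two, orderEmbOfFin_pair hab, orderEmbOfFin_pair hce]

theorem minorPresentation_signedVariable (a b : Fin m) (c e : Fin n) :
    minorPresentation k 2 m n (signedVariable k a b c e) =
      X (a, c) * X (b, e) - X (a, e) * X (b, c) := by
  wlog hab : a < b generalizing a b
  · rcases (not_lt.1 hab).eq_or_lt with rfl | h
    · simp [signedVariable, mul_comm]
    · rw [signedVariable_swap_left, map_neg, this _ _ h]
      ring
  wlog hce : c < e generalizing c e
  · rcases (not_lt.1 hce).eq_or_lt with rfl | h
    · simp [signedVariable]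
    · rw [signedVariable_swap_right, map_neg, this _ _ h]
      ring
  rw [signedVariable_of_lt k hab hce, minorPresentation_X]
  exact genericMinor_pair k hab hce _ _

end SignedVariable

open PairedPoint

section PairProduct

open MonoidAlgebra MulOpposite BiwordFunction

variable (k : Type*) [Field k] {ι : Type*} {m n : ℕ}

/-- The signed indeterminate given by the entries of two words in block `i`. -/
noncomputable def pairFactor (u : PairedPoint ι → Fin m) (v : PairedPoint ι → Fin n) (i : ι) :
    MvPolynomial (MinorIndex 2 m n) k :=
  signedVariable k (u (i, 1)) (u (i, -1)) (v (i, 1)) (v (i, -1))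

theorem pairFactor_comp_flip_left (u : PairedPoint ι → Fin m) (v : PairedPoint ι → Fin n)
    (f : ι → ℤˣ) (i : ι) :
    pairFactor k (u ∘ flip ι f) v i = ((f i : ℤ) : k) • pairFactor k u v i := by
  rcases Int.units_eq_one_or (f i) with h | h
  · simp [pairFactor, h]
  · simp [pairFactor, h, signedVariable_swap_left k (u (i, 1))]

theorem pairFactor_comp_flip_right (u : PairedPoint ι → Fin m) (v : PairedPoint ι → Fin n)
    (f : ι → ℤˣ) (i : ι) :
    pairFactor k u (v ∘ flip ι f) i = ((f i : ℤ) : k) • pairFactor k u v i := by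
  rcases Int.units_eq_one_or (f i) with h | h
  · simp [pairFactor, h]
  · simp [pairFactor, h, signedVariable_swap_right k _ _ (v (i, 1))]

variable (m n) in
/-- The product of the signed indeterminates of the blocks in `U`. -/
noncomputable def pairProduct (U : Finset ι) :
    BiwordFunction (PairedPoint ι) (Fin m) (Fin n) (MvPolynomial (MinorIndex 2 m n) k) :=
  fun u v => ∏ i ∈ U, pairFactor k u v i

theorem totalDegree_pairProduct_le (U : Finset ι) (u : PairedPoint ι → Fin m)
    (v : PairedPoint ι → Fin n) : (pairProduct k m n U u v).totalDegree ≤ U.card :=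
  calc (pairProduct k m n U u v).totalDegree
      ≤ ∑ i ∈ U, (pairFactor k u v i).totalDegree := totalDegree_finsetProd _ _
    _ ≤ ∑ _i ∈ U, 1 := Finset.sum_le_sum fun _ _ => totalDegree_signedVariable_le k _ _ _ _
    _ = U.card := by simp

theorem of_flip_smul_pairProduct (U : Finset ι) (f : ι → ℤˣ) :
    of k _ (flip ι f) • pairProduct k m n U = flipSign k U f • pairProduct k m n U := by
  funext u v
  rw [of_smul_apply]
  simp only [pairProduct, pairFactor_comp_flip_left, Finset.prod_smul]
  rfl

theorem op_of_flip_smul_pairProduct (U : Finset ι) (f : ι → ℤˣ) :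
    op (of k _ (flip ι f)) • pairProduct k m n U = flipSign k U f • pairProduct k m n U := by
  funext u v
  have hf : f⁻¹ = f := funext fun i => Int.units_inv_eq_self (f i)
  rw [op_of_smul_apply, ← map_inv, hf]
  simp only [pairProduct, pairFactor_comp_flip_right, Finset.prod_smul]
  rfl

theorem of_smul_pairProduct_of_disjoint {U V : Finset ι} (hUV : Disjoint U V)
    {w : Perm (PairedPoint ι)} (hw : w ∈ supportedOn U) :
    of k _ w • pairProduct k m n V = pairProduct k m n V := by
  funext u v
  rw [of_smul_apply]
  refine Finset.prod_congr rfl fun i hi => ?_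
  have hwi (s : ℤˣ) : w (i, s) = (i, s) :=
    mem_supportedOn.1 hw _ (Finset.disjoint_right.1 hUV hi)
  simp only [pairFactor, Function.comp_apply, hwi]

theorem op_of_smul_pairProduct_of_disjoint {U V : Finset ι} (hUV : Disjoint U V)
    {w : Perm (PairedPoint ι)} (hw : w ∈ supportedOn U) :
    op (of k _ w) • pairProduct k m n V = pairProduct k m n V := by
  funext u v
  rw [op_of_smul_apply]
  refine Finset.prod_congr rfl fun i hi => ?_
  have hwi (s : ℤˣ) : w⁻¹ (i, s) = (i, s) :=
    mem_supportedOn.1 (inv_mem hw) _ (Finset.disjoint_right.1 hUV hi)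
  simp only [pairFactor, Function.comp_apply, hwi]

variable [Fintype ι] [DecidableEq ι]

theorem signIdempotent_smul_pairProduct [NeZero (2 : k)] (U : Finset ι) :
    signIdempotent k U • pairProduct k m n U = pairProduct k m n U :=
  charIdempotent_smul_eq_self (of_flip_smul_pairProduct k U)

theorem op_signIdempotent_smul_pairProduct [NeZero (2 : k)] (U : Finset ι) :
    op (signIdempotent k U) • pairProduct k m n U = pairProduct k m n U :=
  op_charIdempotent_smul_eq_self (op_of_flip_smul_pairProduct k U)

omit [Fintype ι] in
theorem flipSign_union {U V : Finset ι} (h : Disjoint U V) :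
    flipSign k (U ∪ V) = flipSign k U * flipSign k V :=
  MonoidHom.ext fun _ => Finset.prod_union h

theorem signIdempotent_union_smul_mulRight {U V : Finset ι} (h : Disjoint U V)
    (F : BiwordFunction (PairedPoint ι) (Fin m) (Fin n) (MvPolynomial (MinorIndex 2 m n) k)) :
    signIdempotent k (U ∪ V) • mulRight k (pairProduct k m n V) F =
      mulRight k (pairProduct k m n V) (signIdempotent k U • F) := by
  rw [signIdempotent, flipSign_union k h]
  exact charIdempotent_mul_smul_apply _
    (fun f => of_smul_mulRight (of_flip_smul_pairProduct k V f)) F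

theorem op_signIdempotent_union_smul_mulRight {U V : Finset ι} (h : Disjoint U V)
    (F : BiwordFunction (PairedPoint ι) (Fin m) (Fin n) (MvPolynomial (MinorIndex 2 m n) k)) :
    op (signIdempotent k (U ∪ V)) • mulRight k (pairProduct k m n V) F =
      mulRight k (pairProduct k m n V) (op (signIdempotent k U) • F) := by
  rw [signIdempotent, flipSign_union k h]
  exact op_charIdempotent_mul_smul_apply _
    (fun f => op_of_smul_mulRight (op_of_flip_smul_pairProduct k V f)) F

omit [Fintype ι] in
theorem mulRight_pairProduct {U V : Finset ι} (h : Disjoint U V) :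
    mulRight k (pairProduct k m n V) (pairProduct k m n U) = pairProduct k m n (U ∪ V) := by
  funext u v
  exact (Finset.prod_union h).symm

theorem signIdempotent_mul_mul_smul_pairProduct_union {U V : Finset ι} (h : Disjoint U V)
    {w : Perm (PairedPoint ι)} (hw : w ∈ supportedOn U) :
    (signIdempotent k (U ∪ V) * of k _ w * signIdempotent k (U ∪ V)) •
        pairProduct k m n (U ∪ V) =
      mulRight k (pairProduct k m n V)
        ((signIdempotent k U * of k _ w * signIdempotent k U) • pairProduct k m n U) := by
  have hwV : of k _ w • pairProduct k m n V = (1 : k) • pairProduct k m n V := by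
    rw [one_smul, of_smul_pairProduct_of_disjoint k h hw]
  simp only [mul_smul, ← mulRight_pairProduct k h, signIdempotent_union_smul_mulRight k h,
    of_smul_mulRight hwV, one_smul]

theorem op_signIdempotent_mul_mul_smul_pairProduct_union {U V : Finset ι} (h : Disjoint U V)
    {w : Perm (PairedPoint ι)} (hw : w ∈ supportedOn U) :
    op (signIdempotent k (U ∪ V) * of k _ w * signIdempotent k (U ∪ V)) •
        pairProduct k m n (U ∪ V) =
      mulRight k (pairProduct k m n V)
        (op (signIdempotent k U * of k _ w * signIdempotent k U) • pairProduct k m n U) := by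
  have hwV : op (of k _ w) • pairProduct k m n V = (1 : k) • pairProduct k m n V := by
    rw [one_smul, op_of_smul_pairProduct_of_disjoint k h hw]
  simp only [op_mul, mul_smul, ← mulRight_pairProduct k h,
    op_signIdempotent_union_smul_mulRight k h, op_of_smul_mulRight hwV, one_smul]

end PairProduct

section PairMonomial

open MonoidAlgebra MulOpposite BiwordFunction

variable (k : Type*) [Field k] {ι α β : Type*}

variable (α β) in
/-- The product of the matrix entries at the positions in the blocks of `U`: the row is read off
the first word and the column off the second. -/
noncomputable def pairMonomial (U : Finset ι) :
    BiwordFunction (PairedPoint ι) α β (MvPolynomial (α × β) k) :=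
  fun u v => ∏ x ∈ U ×ˢ Finset.univ, X (u x, v x)

theorem of_mem_bimoduleCentralizer_pairMonomial {U : Finset ι} {g : Perm (PairedPoint ι)}
    (hg : ∀ x, x.1 ∈ U ↔ (g x).1 ∈ U) :
    of k _ g ∈ bimoduleCentralizer k _ (pairMonomial k α β U) := by
  rw [mem_bimoduleCentralizer]
  funext u v
  rw [of_smul_apply, op_of_smul_apply]
  refine Finset.prod_equiv g (fun x => ?_) fun x _ => ?_
  · simp only [Finset.mem_product, Finset.mem_univ, and_true, ← hg]
  · exact congrArg (fun y => X (u (g x), v y)) (g.symm_apply_apply x).symm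

theorem of_supportedOn_mem_bimoduleCentralizer_pairMonomial {U : Finset ι}
    {w : Perm (PairedPoint ι)} (hw : w ∈ supportedOn U) :
    of k _ w ∈ bimoduleCentralizer k _ (pairMonomial k α β U) :=
  of_mem_bimoduleCentralizer_pairMonomial k fun x =>
    ⟨apply_fst_mem hw, fun h => by simpa using apply_fst_mem (inv_mem hw) h⟩

variable [Fintype ι] [DecidableEq ι]

theorem signIdempotent_mem_bimoduleCentralizer_pairMonomial (U : Finset ι) :
    signIdempotent k U ∈ bimoduleCentralizer k _ (pairMonomial k α β U) :=
  (Subalgebra.mem_toSubmodule _).1 <| charIdempotent_mem fun _ =>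
    (Subalgebra.mem_toSubmodule _).2 <|
    of_mem_bimoduleCentralizer_pairMonomial k fun _ => Iff.rfl

theorem sum_prod_eq_card_pow_smul_prod_sum {κ R : Type*} [Fintype κ] [CommSemiring R]
    (U : Finset ι) (t : ι → κ → R) :
    ∑ f : ι → κ, ∏ i ∈ U, t i (f i) = Fintype.card κ ^ Uᶜ.card • ∏ i ∈ U, ∑ s, t i s := by
  have hU (i : ι) (hi : i ∈ U) : ∑ s, (if i ∈ U then t i s else 1) = ∑ s, t i s := by simp [hi]
  have hUc (i : ι) (hi : i ∈ Uᶜ) : ∑ s, (if i ∈ U then t i s else 1) = (Fintype.card κ : R) := by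
    simp [Finset.mem_compl.1 hi]
  calc ∑ f : ι → κ, ∏ i ∈ U, t i (f i)
      = ∑ f : ι → κ, ∏ i, if i ∈ U then t i (f i) else 1 := by
        simp only [Finset.prod_ite_mem, Finset.univ_inter]
    _ = ∏ i, ∑ s, if i ∈ U then t i s else 1 := by
        rw [Finset.prod_univ_sum, Fintype.piFinset_univ]
    _ = Fintype.card κ ^ Uᶜ.card • ∏ i ∈ U, ∑ s, t i s := by
        rw [← Finset.prod_mul_prod_compl U, Finset.prod_congr rfl hU, Finset.prod_congr rfl hUc,
          Finset.prod_const, nsmul_eq_mul, Nat.cast_pow, mul_comm]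

omit [Fintype ι] [DecidableEq ι] in
theorem flipSign_smul_of_flip_smul_pairMonomial (U : Finset ι) (f : ι → ℤˣ)
    (u : PairedPoint ι → α) (v : PairedPoint ι → β) :
    (flipSign k U f⁻¹ • of k _ (flip ι f) • pairMonomial k α β U) u v =
      ∏ i ∈ U, ((f i : ℤ) : k) •
        (X (u (i, f i), v (i, 1)) * X (u (i, -f i), v (i, -1)) : MvPolynomial (α × β) k) := by
  have hf : f⁻¹ = f := funext fun i => Int.units_inv_eq_self (f i)
  rw [Finset.prod_smul, hf, ← flipSign_apply, BiwordFunction.smul_apply, of_smul_apply,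
    pairMonomial, Finset.prod_product]
  simp [UnitsInt.univ]

theorem map_minorPresentation_pairProduct [NeZero (2 : k)] {m n : ℕ} (U : Finset ι) :
    BiwordFunction.map (minorPresentation k 2 m n).toLinearMap (pairProduct k m n U) =
      signIdempotent k U • (2 : k) ^ U.card • pairMonomial k (Fin m) (Fin n) U := by
  have h2 : (2 : k) ≠ 0 := NeZero.ne _
  have hcard : (2 : k) ^ U.card * ((Fintype.card (ι → ℤˣ) : k)⁻¹ * 2 ^ Uᶜ.card) = 1 := by
    rw [Fintype.card_fun, Fintype.card_units_int, ← U.card_add_card_compl, Nat.cast_pow,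
      Nat.cast_ofNat, pow_add]
    field_simp
  rw [smul_algebra_smul_comm, signIdempotent, charIdempotent_smul]
  funext u v
  rw [BiwordFunction.smul_apply, BiwordFunction.smul_apply, BiwordFunction.sum_apply]
  simp only [flipSign_smul_of_flip_smul_pairMonomial]
  rw [sum_prod_eq_card_pow_smul_prod_sum U fun i (s : ℤˣ) => ((s : ℤ) : k) •
      (X (u (i, s), v (i, 1)) * X (u (i, -s), v (i, -1)) : MvPolynomial (Fin m × Fin n) k),
    Fintype.card_units_int, ← Nat.cast_smul_eq_nsmul k, smul_smul, smul_smul, Nat.cast_pow,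
    Nat.cast_ofNat, mul_assoc, hcard, one_smul, BiwordFunction.map_apply, AlgHom.toLinearMap_apply,
    pairProduct, map_prod]
  refine Finset.prod_congr rfl fun i _ => ?_
  rw [pairFactor, minorPresentation_signedVariable]
  simp [UnitsInt.univ, ← sub_eq_add_neg, mul_comm]

end PairMonomial

section LowDegree

open MonoidAlgebra MulOpposite BiwordFunction

variable (k : Type*) [Field k] {ι : Type*} [Fintype ι] [DecidableEq ι] {m n : ℕ}

theorem mul_mul_mem_bimoduleCentralizer_map_pairProduct [NeZero (2 : k)] {U : Finset ι}
    {w : Perm (PairedPoint ι)} (hw : w ∈ supportedOn U) :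
    signIdempotent k U * of k _ w * signIdempotent k U ∈ bimoduleCentralizer k _
      (BiwordFunction.map (minorPresentation k 2 m n).toLinearMap (pairProduct k m n U)) := by
  rw [map_minorPresentation_pairProduct]
  refine mul_mul_mem_bimoduleCentralizer_smul (isIdempotentElem_signIdempotent k U) ?_ ?_
  · exact bimoduleCentralizer_le_smul _ _ (signIdempotent_mem_bimoduleCentralizer_pairMonomial k U)
  · exact bimoduleCentralizer_le_smul _ _
      (of_supportedOn_mem_bimoduleCentralizer_pairMonomial k hw)

variable (m n) in
/-- The ideal generated by the relations of total degree at most `D`. -/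
noncomputable def lowDegreeRelations (D : ℕ) : Ideal (MvPolynomial (MinorIndex 2 m n) k) :=
  Ideal.span {x | x ∈ minorRelations k 2 m n ∧ x.totalDegree ≤ D}

omit [Fintype ι] [DecidableEq ι] in
theorem smul_pairProduct_sub_mem_lowDegreeRelations {D : ℕ} {U : Finset ι} (hU : U.card ≤ D)
    {a : MonoidAlgebra k (Perm (PairedPoint ι))}
    (ha : a ∈ bimoduleCentralizer k _
      (BiwordFunction.map (minorPresentation k 2 m n).toLinearMap (pairProduct k m n U)))
    (u : PairedPoint ι → Fin m) (v : PairedPoint ι → Fin n) :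
    (a • pairProduct k m n U) u v - (op a • pairProduct k m n U) u v ∈
      lowDegreeRelations k m n D := by
  refine Ideal.subset_span ⟨?_, ?_⟩
  · rw [mem_bimoduleCentralizer, ← map_smul_left, ← map_smul_right] at ha
    exact (RingHom.sub_mem_ker_iff _).2 (congrFun (congrFun ha u) v)
  · have hdeg (u v) : pairProduct k m n U u v ∈
        restrictTotalDegree (MinorIndex 2 m n) k U.card :=
      (mem_restrictTotalDegree _ _ _).2 (totalDegree_pairProduct_le k U u v)
    exact ((mem_restrictTotalDegree _ _ _).1 (Submodule.sub_mem _
      (smul_apply_mem hdeg a u v) (op_smul_apply_mem hdeg a u v))).trans hU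

variable (ι m n) in
/-- The product of the signed indeterminates of all blocks, modulo the relations of degree at
most `D`. -/
noncomputable def pairProductMod (D : ℕ) : BiwordFunction (PairedPoint ι) (Fin m) (Fin n)
    (MvPolynomial (MinorIndex 2 m n) k ⧸ lowDegreeRelations k m n D) :=
  BiwordFunction.map (Ideal.Quotient.mkₐ k (lowDegreeRelations k m n D)).toLinearMap
    (pairProduct k m n Finset.univ)

theorem mul_mul_mem_bimoduleCentralizer_pairProductMod [NeZero (2 : k)] {D : ℕ} {U : Finset ι}
    (hU : U.card ≤ D) {w : Perm (PairedPoint ι)} (hw : w ∈ supportedOn U) :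
    signIdempotent k Finset.univ * of k _ w * signIdempotent k Finset.univ ∈
      bimoduleCentralizer k _ (pairProductMod k ι m n D) := by
  rw [mem_bimoduleCentralizer, pairProductMod, ← map_smul_left, ← map_smul_right,
    ← Finset.union_compl U,
    signIdempotent_mul_mul_smul_pairProduct_union k disjoint_compl_right hw,
    op_signIdempotent_mul_mul_smul_pairProduct_union k disjoint_compl_right hw]
  funext u v
  refine Ideal.Quotient.eq.2 ?_
  rw [mulRight_apply, mulRight_apply, ← sub_mul]
  exact Ideal.mul_mem_right _ _ (smul_pairProduct_sub_mem_lowDegreeRelations k hU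
    (mul_mul_mem_bimoduleCentralizer_map_pairProduct k hw) u v)

theorem signIdempotent_mul_mul_mem_bimoduleCentralizer [NeZero (2 : k)]
    (a : MonoidAlgebra k (Perm (PairedPoint ι))) :
    signIdempotent k Finset.univ * a * signIdempotent k Finset.univ ∈
      bimoduleCentralizer k _ (pairProductMod k ι m n 3) := by
  let C : NonUnitalSubalgebra k (MonoidAlgebra k (Perm (PairedPoint ι))) :=
    (bimoduleCentralizer k _ (pairProductMod k ι m n 3)).toNonUnitalSubalgebra
  suffices h : a ∈ signCorner C from
    (mem_cornerPreimage (e := signIdempotent k Finset.univ) (C := C)).1 h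
  induction a using MonoidAlgebra.induction_on with
  | of w =>
    refine of_mem_of_forall_card_le_three (fun V hV w hw => ?_) Finset.univ w
      (mem_supportedOn.2 fun x hx => (hx (Finset.mem_univ _)).elim)
    exact mem_cornerPreimage.2 (mul_mul_mem_bimoduleCentralizer_pairProductMod k hV hw)
  | add a b ha hb => exact add_mem ha hb
  | smul c a ha => exact Submodule.smul_mem _ c ha

end LowDegree

section WordExponent

variable {X C : Type*} [Fintype X]

/-- The content of a word: the exponent vector counting the occurrences of each letter. -/
noncomputable def wordExponent (w : X → C) : C →₀ ℕ := ∑ x, Finsupp.single (w x) 1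

theorem degree_wordExponent (w : X → C) : (wordExponent w).degree = Fintype.card X := by
  simp [wordExponent]

theorem exists_perm_comp_eq_of_wordExponent_eq {w w' : X → C}
    (h : wordExponent w = wordExponent w') : ∃ g : Perm X, w' ∘ g = w := by
  classical
  have key (w : X → C) (c : C) : Fintype.card {x // w x = c} = wordExponent w c := by
    simp only [wordExponent, Finsupp.finsetSum_apply, Finsupp.single_apply, Fintype.card_subtype,
      Finset.card_filter]
  have e (c : C) : {x // w x = c} ≃ {x // w' x = c} :=
    Fintype.equivOfCardEq (by rw [key, key, h])
  exact ⟨ofFiberEquiv e, funext fun x => ofFiberEquiv_map e x⟩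

end WordExponent

open MulOpposite BiwordFunction

section Interpolation

open MonoidAlgebra

variable {k α β M : Type*} [Field k] [AddCommGroup M] [Module k M]

variable (k) in
theorem pairMonomial_univ {ι : Type*} [Fintype ι] (u : PairedPoint ι → α) (v : PairedPoint ι → β) :
    pairMonomial k α β Finset.univ u v = monomial (wordExponent fun x => (u x, v x)) 1 := by
  rw [wordExponent, monomial_sum_one, pairMonomial, Finset.univ_product_univ]
  rfl

theorem apply_comp_comp_of_forall_smul_eq {X : Type*} {F : BiwordFunction X α β M}
    (hF : ∀ a : MonoidAlgebra k (Perm X), a • F = op a • F) (g : Perm X) (u : X → α)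
    (v : X → β) : F (u ∘ g) (v ∘ g) = F u v :=
  calc F (u ∘ g) (v ∘ g) = (of k _ g • F) u (v ∘ g) := (of_smul_apply k g F u _).symm
    _ = F u ((v ∘ g) ∘ (g⁻¹ : Perm X)) := by rw [hF, op_of_smul_apply]
    _ = F u v := congrArg (F u) (funext fun x => congrArg v (g.apply_symm_apply x))

theorem exists_linearMap_map_pairMonomial_eq
    (Ψ : ∀ d : ℕ, BiwordFunction (PairedPoint (Fin d)) α β M)
    (hΨ : ∀ d (a : MonoidAlgebra k (Perm (PairedPoint (Fin d)))), a • Ψ d = op a • Ψ d) :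
    ∃ P : MvPolynomial (α × β) k →ₗ[k] M,
      ∀ d, BiwordFunction.map P (pairMonomial k α β Finset.univ) = Ψ d := by
  let I := Σ d : ℕ, (PairedPoint (Fin d) → α) × (PairedPoint (Fin d) → β)
  let exponent (b : I) : α × β →₀ ℕ := wordExponent fun x => (b.2.1 x, b.2.2 x)
  let value (b : I) : M := Ψ b.1 b.2.1 b.2.2
  have hvalue : value.FactorsThrough exponent := by
    rintro ⟨d, u, v⟩ ⟨d', u', v'⟩ h
    obtain rfl : d = d' := by
      have hd := congrArg Finsupp.degree h
      simpa [exponent, degree_wordExponent] using hd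
    obtain ⟨g, hg⟩ := exists_perm_comp_eq_of_wordExponent_eq h
    have hu : u' ∘ g = u := funext fun x => congrArg Prod.fst (congrFun hg x)
    have hv : v' ∘ g = v := funext fun x => congrArg Prod.snd (congrFun hg x)
    calc Ψ d u v = Ψ d (u' ∘ g) (v' ∘ g) := by rw [hu, hv]
      _ = Ψ d u' v' := apply_comp_comp_of_forall_smul_eq (hΨ d) g u' v'
  refine ⟨(basisMonomials (α × β) k).constr k (Function.extend exponent value 0), fun d => ?_⟩
  funext u v
  have hbasis := (basisMonomials (α × β) k).constr_basis k (Function.extend exponent value 0)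
    (wordExponent fun x => (u x, v x))
  rw [coe_basisMonomials] at hbasis
  rw [BiwordFunction.map_apply, pairMonomial_univ]
  exact hbasis.trans (hvalue.extend_apply 0 ⟨d, u, v⟩)

end Interpolation

section Main

variable (k : Type*) [Field k] {m n : ℕ}

theorem exists_pairProduct_eq_monomial (s : MinorIndex 2 m n →₀ ℕ) :
    ∃ (d : ℕ) (u : PairedPoint (Fin d) → Fin m) (v : PairedPoint (Fin d) → Fin n),
      pairProduct k m n Finset.univ u v = monomial s 1 := by
  choose a b c e hX using exists_X_eq_signedVariable k (m := m) (n := n)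
  let l := s.toMultiset.toList
  refine ⟨l.length, fun x => if x.2 = 1 then a (l.get x.1) else b (l.get x.1),
    fun x => if x.2 = 1 then c (l.get x.1) else e (l.get x.1), ?_⟩
  have hl : monomial s (1 : k) = (l.map X).prod := by
    rw [← Multiset.prod_coe, ← Multiset.map_coe, Multiset.coe_toList, Finsupp.toMultiset_map,
      Finsupp.prod_toMultiset, Finsupp.prod_mapDomain_index (by simp) (by simp [pow_add]),
      monomial_eq, C_1, one_mul]
  rw [hl, ← Fin.prod_univ_fun_getElem]
  refine Finset.prod_congr rfl fun i _ => ?_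
  simp [pairFactor, hX]

variable [CharZero k]

theorem exists_central_signIdempotent_smul_eq_pairProductMod (d : ℕ) :
    ∃ Ψ : BiwordFunction (PairedPoint (Fin d)) (Fin m) (Fin n)
        (MvPolynomial (MinorIndex 2 m n) k ⧸ lowDegreeRelations k m n 3),
      (∀ a : MonoidAlgebra k (Perm (PairedPoint (Fin d))), a • Ψ = op a • Ψ) ∧
        signIdempotent k (Finset.univ : Finset (Fin d)) • Ψ = pairProductMod k (Fin d) m n 3 := by
  refine exists_central_of_isSemisimpleRing (A := MonoidAlgebra k (Perm (PairedPoint (Fin d))))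
    (e := signIdempotent k Finset.univ) (Θ := pairProductMod k (Fin d) m n 3) ?_ ?_ fun a =>
      mem_bimoduleCentralizer.1 (signIdempotent_mul_mul_mem_bimoduleCentralizer k a)
  · rw [pairProductMod, ← map_smul_left, signIdempotent_smul_pairProduct]
  · rw [pairProductMod, ← map_smul_right, op_signIdempotent_smul_pairProduct]

theorem exists_linearMap_comp_minorPresentation_eq (m n : ℕ) :
    ∃ P : MvPolynomial (Fin m × Fin n) k →ₗ[k]
        MvPolynomial (MinorIndex 2 m n) k ⧸ lowDegreeRelations k m n 3,
      P ∘ₗ (minorPresentation k 2 m n).toLinearMap =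
        (Ideal.Quotient.mkₐ k (lowDegreeRelations k m n 3)).toLinearMap := by
  choose Ψ hΨ hΨΘ using exists_central_signIdempotent_smul_eq_pairProductMod k (m := m) (n := n)
  obtain ⟨P, hP⟩ := exists_linearMap_map_pairMonomial_eq (fun d => ((2 : k) ^ d)⁻¹ • Ψ d)
    fun d a => bimoduleCentralizer_le_smul _ _ (mem_bimoduleCentralizer.2 (hΨ d a))
  have hPΘ (d : ℕ) : BiwordFunction.map P (BiwordFunction.map
      (minorPresentation k 2 m n).toLinearMap (pairProduct k m n Finset.univ)) =
        pairProductMod k (Fin d) m n 3 := by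
    rw [map_minorPresentation_pairProduct, map_smul_left, map_smul, hP, Finset.card_univ,
      Fintype.card_fin, smul_inv_smul₀ (pow_ne_zero d two_ne_zero), hΨΘ]
  refine ⟨P, (basisMonomials (MinorIndex 2 m n) k).ext fun s => ?_⟩
  obtain ⟨d, u, v, huv⟩ := exists_pairProduct_eq_monomial k s
  rw [coe_basisMonomials]
  beta_reduce
  rw [← huv]
  exact congrFun (congrFun (hPΘ d) u) v

end Main

end MinorRelations

theorem minorRelations_two_four_n_general (k : Type*) [Field k] [CharZero k] (m n : ℕ) :
    GeneratedInDegreesLE (minorRelations k 2 m n) 3 := by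
  obtain ⟨P, hP⟩ := MinorRelations.exists_linearMap_comp_minorPresentation_eq k m n
  refine le_antisymm (fun x hx => ?_) (Ideal.span_le.2 fun x hx => hx.1)
  have hx0 : minorPresentation k 2 m n x = 0 := hx
  have hPx : P (minorPresentation k 2 m n x) = 0 := (congrArg P hx0).trans (map_zero P)
  exact Ideal.Quotient.eq_zero_iff_mem.1 ((LinearMap.congr_fun hP x).symm.trans hPx)

/-- The ideal of relations among the 2-minors of a generic `4 × n` matrix is generated
by its elements of degree at most 3. -/
theorem minorRelations_two_four_n (k : Type*) [Field k] [CharZero k]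
    (n : ℕ) (hn : 4 ≤ n) :
    GeneratedInDegreesLE (minorRelations k 2 4 n) 3 :=
  minorRelations_two_four_n_general k 4 n
end

section
/- For all 2 ≤ m ≤ n and every field k of characteristic 0, every homogeneous element of degree 4 of J_2(m,n) lies in the ideal of S_2(m,n) generated by the elements of J_2(m,n) of degree at most 3. In other words, J_2(m,n) has no minimal generators of degree 4. -/
open MvPolynomial

/-! A monomial of degree `d` in the `t`-minors is, up to sign, a bitableau: a filling `(r, c)` of
`d` blocks of `t` positions, alternating on each block. Expanding its minors antisymmetrizes the
monomial `∏ p, X (r p, c p)` over the row group `B` of permutations preserving the blocks, and this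
monomial does not change when `r` and `c` are permuted simultaneously. Let `Ψ x y` be the bitableau
with `r` permuted by `x` and `c` by `y`, with signs. If, modulo the ideal generated by relations of
degree less than `d`, every permutation `g` is balanced, that is
`∑ b, Ψ (x * b * g) y = ∑ b, Ψ x (y * b * g⁻¹)` with `b` ranging over `B`, then the semisimplicity
of the group algebra allows one to recover bitableaux of degree `d` from the expansions of their
minors, so that all relations of degree `d` lie in that ideal.

For `t = 2` a permutation `g` of the positions is a 2-regular multigraph: its vertices and its edges
are the blocks, the block `a` being the edge between the blocks of `g (a, 0)` and `g (a, 1)`. A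
loop makes both sides of the balance share a minor, and cancelling this minor leaves a relation of
smaller degree; so graphs with a loop are balanced. Composing double cosets, one deduces that
exchanging the far ends of two adjacent edges changes the sign of the difference of the two sides.
Two parallel edges are unchanged by such an exchange, and a four-cycle can be brought to the same
graph by two and by three exchanges, so in both cases the difference is its own opposite. A loopless
2-regular multigraph on four vertices contains two parallel edges or is a four-cycle. -/

namespace MinorRelation

open Equiv Finset
open Equiv.Perm (sign)

section Balance

variable {G Q : Type*} [Group G] (B : Subgroup G)

/-- Functions on `G × G` that are invariant under right translation of either argument by `B`. -/
def Biinvariant (Ψ : G → G → Q) : Prop :=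
  ∀ x y, ∀ b ∈ B, Ψ (x * b) y = Ψ x y ∧ Ψ x (y * b) = Ψ x y

variable {B} in
lemma Biinvariant.flip {Ψ : G → G → Q} (hΨ : Biinvariant B Ψ) : Biinvariant B (flip Ψ) :=
  fun x y b hb => (hΨ y x b hb).symm

variable {B} in
lemma Biinvariant.comp {Ψ : G → G → Q} (hΨ : Biinvariant B Ψ) {Q' : Type*} (f : Q → Q') :
    Biinvariant B fun x y => f (Ψ x y) :=
  fun x y b hb => (hΨ x y b hb).imp (congrArg f) (congrArg f)

variable [AddCommGroup Q] [Fintype B]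

/-- The defect of `Ψ` from being unchanged when the double coset operator of `g` on the first
argument is replaced by the double coset operator of `g⁻¹` on the second one. -/
def balance (Ψ : G → G → Q) (g x y : G) : Q :=
  ∑ b : B, Ψ (x * b * g) y - ∑ b : B, Ψ x (y * b * g⁻¹)

/-- `Ψ` cannot distinguish the double coset operator of `g` on its first argument from that of
`g⁻¹` on its second argument. -/
def Balanced (Ψ : G → G → Q) (g : G) : Prop :=
  ∀ x y, balance B Ψ g x y = 0

variable {B} {Ψ : G → G → Q}

lemma balance_flip (g x y : G) : balance B (flip Ψ) g x y = -balance B Ψ g⁻¹ y x := by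
  simp [balance, flip]

lemma balanced_flip_inv {g : G} : Balanced B (flip Ψ) g⁻¹ ↔ Balanced B Ψ g := by
  simp only [Balanced, balance_flip, neg_eq_zero, inv_inv]
  exact forall_comm

lemma Biinvariant.balance_mul_left (hΨ : Biinvariant B Ψ) (b : B) (g x y : G) :
    balance B Ψ (b * g) x y = balance B Ψ g x y := by
  unfold balance
  congr 1
  · exact Fintype.sum_equiv (Equiv.mulRight b) _ _ fun c => by simp [mul_assoc]
  · refine sum_congr rfl fun c _ => ?_
    rw [mul_inv_rev, ← mul_assoc]
    exact (hΨ x _ _ (B.inv_mem b.2)).2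

lemma Biinvariant.balance_mul_right (hΨ : Biinvariant B Ψ) (b : B) (g x y : G) :
    balance B Ψ (g * b) x y = balance B Ψ g x y := by
  have h := hΨ.flip.balance_mul_left b⁻¹ g⁻¹ y x
  rw [balance_flip, balance_flip, neg_inj] at h
  simpa using h

/-- Balancing along `g` and `h` amounts to balancing along their product in the Hecke algebra of
`B`, which is a sum over the double cosets meeting `g * B * h`. -/
lemma sum_balance_mul_mul {g h : G} (hg : Balanced B Ψ g) (hh : Balanced B Ψ h) (x y : G) :
    ∑ b : B, balance B Ψ (g * b * h) x y = 0 := by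
  have exchange : ∀ {g}, Balanced B Ψ g → ∀ x y,
      ∑ b : B, Ψ (x * b * g) y = ∑ b : B, Ψ x (y * b * g⁻¹) :=
    fun hg x y => sub_eq_zero.1 (hg x y)
  have left : ∑ b : B, ∑ c : B, Ψ (x * c * (g * b * h)) y =
      ∑ b : B, ∑ c : B, Ψ x (y * b * h⁻¹ * c * g⁻¹) := by
    calc _ = ∑ c : B, ∑ b : B, Ψ (x * c * g * b * h) y := by
          rw [sum_comm]; simp only [mul_assoc]
      _ = ∑ b : B, ∑ c : B, Ψ (x * c * g) (y * b * h⁻¹) := by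
          simp only [exchange hh]; rw [sum_comm]
      _ = _ := by simp only [exchange hg]
  have right : ∑ b : B, ∑ c : B, Ψ x (y * c * (g * b * h)⁻¹) =
      ∑ b : B, ∑ c : B, Ψ x (y * b * h⁻¹ * c * g⁻¹) := by
    rw [sum_comm]
    refine sum_congr rfl fun c _ => Fintype.sum_equiv (Equiv.inv B) _ _ fun b => ?_
    simp [mul_assoc]
  simp only [balance, sum_sub_distrib, left, right, sub_self]

end Balance

section ConjSum

variable (k G : Type*) [CommSemiring k] [Group G] [Fintype G]

/-- The sum `∑ g, g v g⁻¹` of the conjugates of an element `v` of the group algebra. -/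
noncomputable def conjSum : MonoidAlgebra k G →ₗ[k] MonoidAlgebra k G :=
  ∑ g : G, LinearMap.mulLeft k (MonoidAlgebra.of k G g) ∘ₗ
    LinearMap.mulRight k (MonoidAlgebra.of k G g⁻¹)

variable {k G}

lemma conjSum_apply (v : MonoidAlgebra k G) :
    conjSum k G v = ∑ g : G, MonoidAlgebra.of k G g * (v * MonoidAlgebra.of k G g⁻¹) := by
  simp [conjSum]

lemma conjSum_mul_comm (v w : MonoidAlgebra k G) : conjSum k G (v * w) = conjSum k G (w * v) := by
  induction v using MonoidAlgebra.induction_on with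
  | of x =>
    simp only [conjSum_apply]
    refine Fintype.sum_equiv (Equiv.mulRight x) _ _ fun g => ?_
    simp only [Equiv.coe_mulRight, mul_inv_rev, map_mul, mul_assoc]
    rw [← mul_assoc (MonoidAlgebra.of k G x) (MonoidAlgebra.of k G x⁻¹), ← map_mul, mul_inv_cancel,
      map_one, one_mul]
  | add v v' hv hv' => rw [add_mul, mul_add, map_add, map_add, hv, hv']
  | smul c v hv => rw [smul_mul_assoc, mul_smul_comm, map_smul, map_smul, hv]

end ConjSum

section Averaging

variable {k G : Type*} [Field k] [Group G]

/-- The element `u` comes from writing a right unit of the left ideal generated by the `a * h` as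
`∑ h, α h * a * h`: the conjugates of a product of two factors have the same sum in either order. -/
lemma exists_mul_conjSum_mul_eq [Fintype G] [NeZero (Nat.card G : k)] (a : MonoidAlgebra k G) :
    ∃ u, a * conjSum k G (a * u) = a := by
  let left : Ideal (MonoidAlgebra k G) :=
    Ideal.span (Set.range fun h : G => a * MonoidAlgebra.of k G h)
  obtain ⟨e, he, hspan⟩ := IsSemisimpleRing.ideal_eq_span_idempotent left
  obtain ⟨α, hα⟩ : ∃ α : G → MonoidAlgebra k G, ∑ h, α h * (a * MonoidAlgebra.of k G h) = e :=
    (Submodule.mem_span_range_iff_exists_fun _).1 <| by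
      change e ∈ left
      exact hspan ▸ Ideal.mem_span_singleton_self e
  have right_unit : ∀ h, a * MonoidAlgebra.of k G h * e = a * MonoidAlgebra.of k G h := fun h => by
    have hmem : a * MonoidAlgebra.of k G h ∈ left := Ideal.subset_span ⟨h, rfl⟩
    rw [hspan, Ideal.mem_span_singleton'] at hmem
    obtain ⟨c, hc⟩ := hmem
    rw [← hc, mul_assoc, he.eq]
  have conj_e : a * conjSum k G e = (Nat.card G : k) • a := by
    rw [conjSum_apply, mul_sum]
    calc _ = ∑ _g : G, a := sum_congr rfl fun g _ => by
          rw [← mul_assoc, ← mul_assoc, right_unit, mul_assoc, ← map_mul, mul_inv_cancel, map_one,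
            mul_one]
      _ = _ := by rw [sum_const, card_univ, Nat.card_eq_fintype_card, Nat.cast_smul_eq_nsmul]
  refine ⟨(Nat.card G : k)⁻¹ • ∑ h, MonoidAlgebra.of k G h * α h, ?_⟩
  have conj_eq : conjSum k G (a * ∑ h, MonoidAlgebra.of k G h * α h) = conjSum k G e := by
    rw [← hα, mul_sum, map_sum, map_sum]
    exact sum_congr rfl fun h _ => by rw [← mul_assoc, conjSum_mul_comm]
  rw [mul_smul_comm, map_smul, mul_smul_comm, conj_eq, conj_e, inv_smul_smul₀ (NeZero.ne _)]

variable {Q : Type*} [AddCommGroup Q] [Module k Q] (B : Subgroup G) [Fintype B]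

lemma exists_sum_smul_sum_conj_eq [Fintype G] [NeZero (Nat.card G : k)] :
    ∃ u : G → k, ∀ Λ : G → Q, (∀ b ∈ B, ∀ x, Λ (b * x) = Λ x) →
      ∑ x, u x • ∑ g, ∑ b : B, Λ (g * b * x * g⁻¹) = Λ 1 := by
  obtain ⟨u, hu⟩ := exists_mul_conjSum_mul_eq (∑ b : B, MonoidAlgebra.of k G b)
  refine ⟨u.coeff, fun Λ hΛ => ?_⟩
  let L : MonoidAlgebra k G →ₗ[k] Q :=
    Finsupp.linearCombination k Λ ∘ₗ (MonoidAlgebra.coeffLinearEquiv k).toLinearMap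
  have L_of : ∀ x, L (MonoidAlgebra.of k G x) = Λ x := fun x => by simp [L, MonoidAlgebra.of]
  have L_sum_mul : ∀ v, L ((∑ b : B, MonoidAlgebra.of k G b) * v) = (Nat.card B : k) • L v := by
    intro v
    induction v using MonoidAlgebra.induction_on with
    | of x =>
      rw [sum_mul, map_sum, Nat.cast_smul_eq_nsmul, Nat.card_eq_fintype_card]
      simp only [← map_mul, L_of, hΛ _ (Subtype.prop _), sum_const, card_univ]
    | add v w hv hw => rw [mul_add, map_add, map_add, hv, hw, smul_add]
    | smul c v hv => rw [mul_smul_comm, map_smul, map_smul, hv, smul_comm]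
  have card_ne : (Nat.card B : k) ≠ 0 := fun h =>
    NeZero.ne (Nat.card G : k) (by rw [← B.card_mul_index, Nat.cast_mul, h, zero_mul])
  have L_conj : L (conjSum k G ((∑ b : B, MonoidAlgebra.of k G b) * u)) = Λ 1 := by
    have h := congrArg L hu
    rw [L_sum_mul, ← mul_one (∑ b : B, MonoidAlgebra.of k G b), L_sum_mul, mul_one] at h
    rw [smul_right_injective Q card_ne h, MonoidAlgebra.one_def, ← L_of]
    rfl
  have u_eq : u = ∑ x, u.coeff x • MonoidAlgebra.of k G x := by
    ext x
    simp [MonoidAlgebra.of]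
  rw [← L_conj]
  conv_rhs => rw [u_eq]
  simp only [mul_sum, mul_smul_comm, map_sum, map_smul, conjSum_apply, sum_mul, ← map_mul, L_of]
  refine sum_congr rfl fun x _ => ?_
  rw [sum_comm]
  simp only [mul_assoc]

lemma exists_invariant_sum_eq [Finite G] [NeZero (Nat.card G : k)] :
    ∃ s : (G → G → Q) →ₗ[k] Q, (∀ Ψ q, s (fun x y => Ψ (q * x) (q * y)) = s Ψ) ∧
      ∀ Ψ, Biinvariant B Ψ → (∀ g, Balanced B Ψ g) →
        ∑ b : B, s (fun x y => Ψ (b * x) y) = Ψ 1 1 := by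
  have := Fintype.ofFinite G
  obtain ⟨u, hu⟩ := exists_sum_smul_sum_conj_eq (k := k) (Q := Q) B
  let s : (G → G → Q) →ₗ[k] Q :=
    ∑ x, u x • ∑ g, LinearMap.proj (g * x⁻¹) ∘ₗ LinearMap.proj (φ := fun _ => G → Q) g
  have s_apply : ∀ Ψ, s Ψ = ∑ x, u x • ∑ g, Ψ g (g * x⁻¹) := fun Ψ => by simp [s]
  refine ⟨s, fun Ψ q => ?_, fun Ψ hΨ hbal => ?_⟩
  · rw [s_apply, s_apply]
    refine sum_congr rfl fun x _ => congrArg _ ?_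
    exact Fintype.sum_equiv (Equiv.mulLeft q) _ _ fun g => by simp [mul_assoc]
  · have hΛ : ∀ b ∈ B, ∀ x, Ψ 1 (b * x)⁻¹ = Ψ 1 x⁻¹ := fun b hb x => by
      rw [mul_inv_rev]
      exact (hΨ 1 x⁻¹ _ (B.inv_mem hb)).2
    have exchange : ∀ x g : G, ∑ b : B, Ψ (b * g) (g * x⁻¹) =
        ∑ b : B, Ψ 1 (g * b * x * g⁻¹)⁻¹ := fun x g => by
      have h := sub_eq_zero.1 (hbal g 1 (g * x⁻¹))
      simp only [one_mul] at h
      rw [h]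
      exact Fintype.sum_equiv (Equiv.inv B) _ _ fun b => by simp [mul_assoc]
    calc _ = ∑ x, u x • ∑ g, ∑ b : B, Ψ (b * g) (g * x⁻¹) := by
          simp only [s_apply]
          rw [sum_comm]
          exact sum_congr rfl fun x _ => by rw [← smul_sum, sum_comm]
      _ = Ψ 1 1⁻¹ := by simp only [exchange, hu (fun z => Ψ 1 z⁻¹) hΛ]
      _ = Ψ 1 1 := by rw [inv_one]

end Averaging

section Block

variable (ι κ : Type*)

/-- The row group of the positions `ι × κ`: the permutations mapping each block `{a} × κ` to
itself. -/
def blockSubgroup : Subgroup (Perm (ι × κ)) where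
  carrier := {g | ∀ p, (g p).1 = p.1}
  one_mem' _ := rfl
  mul_mem' hg hh p := (hg _).trans (hh p)
  inv_mem' {g} hg p := by simpa using (hg (g⁻¹ p)).symm

variable {ι κ}

lemma mem_blockSubgroup {g : Perm (ι × κ)} : g ∈ blockSubgroup ι κ ↔ ∀ p, (g p).1 = p.1 :=
  Iff.rfl

instance [Fintype ι] [Fintype κ] [DecidableEq ι] :
    DecidablePred (· ∈ blockSubgroup ι κ) :=
  fun _ => decidable_of_iff _ mem_blockSubgroup.symm

lemma swap_mem_blockSubgroup [DecidableEq ι] [DecidableEq κ] {p q : ι × κ} (h : p.1 = q.1) :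
    swap p q ∈ blockSubgroup ι κ := fun x => by
  rw [swap_apply_def]
  split_ifs <;> simp_all only

/-- A permutation preserving the blocks is a family of permutations of the blocks. -/
def blockEquiv : (ι → Perm κ) ≃ blockSubgroup ι κ where
  toFun ε := ⟨Equiv.prodCongrRight ε, fun _ => rfl⟩
  invFun b a :=
    { toFun i := (b.1 (a, i)).2
      invFun i := (b.1.symm (a, i)).2
      left_inv i := by
        have h : (a, (b.1 (a, i)).2) = b.1 (a, i) := Prod.ext (b.2 (a, i)).symm rfl
        simp [h]
      right_inv i := by
        have h : (a, (b.1.symm (a, i)).2) = b.1.symm (a, i) :=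
          Prod.ext ((blockSubgroup ι κ).inv_mem b.2 (a, i)).symm rfl
        simp [h] }
  left_inv ε := by ext; rfl
  right_inv b := Subtype.ext <| Equiv.ext fun p => Prod.ext (b.2 p).symm rfl

lemma exists_perm_apply_eq [Finite κ] {g : Perm (ι × κ)} {a b : ι} (h : ∀ i, (g (a, i)).1 = b) :
    ∃ σ : Perm κ, ∀ i, g (a, i) = (b, σ i) := by
  have eq_mk : ∀ i, g (a, i) = (b, (g (a, i)).2) := fun i => Prod.ext (h i) rfl
  have injective : Function.Injective fun i => (g (a, i)).2 := fun i j hij => by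
    have := g.injective ((eq_mk i).trans ((congrArg (Prod.mk b) hij).trans (eq_mk j).symm))
    exact (Prod.mk.inj this).2
  exact ⟨Equiv.ofBijective _ (Finite.injective_iff_bijective.1 injective), eq_mk⟩

lemma inv_apply_fst_eq [Finite κ] {g : Perm (ι × κ)} {a b : ι} (h : ∀ i, (g (a, i)).1 = b) (i : κ) :
    (g⁻¹ (b, i)).1 = a := by
  obtain ⟨σ, hσ⟩ := exists_perm_apply_eq h
  rw [← σ.apply_symm_apply i, ← hσ]
  simp

end Block

section Exchange

variable {ι : Type*}

/-- The other position of the block of `p`. -/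
def mate (p : ι × Fin 2) : ι × Fin 2 := (p.1, p.2.rev)

@[simp] lemma mate_fst (p : ι × Fin 2) : (mate p).1 = p.1 := rfl

@[simp] lemma mate_mate (p : ι × Fin 2) : mate (mate p) = p := by simp [mate]

lemma mate_ne (p : ι × Fin 2) : mate p ≠ p := by
  obtain ⟨a, i⟩ := p
  fin_cases i <;> simp [mate]

lemma eq_or_eq_mate {p q : ι × Fin 2} (h : q.1 = p.1) : q = p ∨ q = mate p := by
  obtain ⟨a, i⟩ := p
  obtain ⟨b, j⟩ := q
  obtain rfl : b = a := h
  fin_cases i <;> fin_cases j <;> simp [mate]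

lemma mate_eq_of_ne {p q : ι × Fin 2} (h : q.1 = p.1) (hne : q ≠ p) : mate p = q :=
  ((eq_or_eq_mate h).resolve_left hne).symm

lemma apply_mate {b : Perm (ι × Fin 2)} (hb : b ∈ blockSubgroup ι (Fin 2)) (p : ι × Fin 2) :
    b (mate p) = mate (b p) :=
  (mate_eq_of_ne ((hb (mate p)).trans (hb p).symm) (b.injective.ne (mate_ne p))).symm

lemma fst_ne_of_apply_fst_ne {A : Perm (ι × Fin 2)} {p q : ι × Fin 2}
    (h : (A p).1 ≠ (A q).1) (h' : (A p).1 ≠ (A (mate q)).1) : p.1 ≠ q.1 := fun hpq => by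
  rcases eq_or_eq_mate hpq with rfl | rfl
  · exact h rfl
  · exact h' rfl

/-- The edges `x₀, x₁, x₂, x₃` of the graph of `A` form a cycle of length four, with consecutive
vertices at `A x₀`, `A (mate x₀)`, `A x₁` and `A (mate x₂)`. -/
structure IsFourCycle (A : Perm (ι × Fin 2)) (x₀ x₁ x₂ x₃ : ι × Fin 2) : Prop where
  eq₃₀ : (A x₀).1 = (A x₃).1
  eq₀₁ : (A (mate x₀)).1 = (A (mate x₁)).1
  eq₁₂ : (A x₁).1 = (A x₂).1
  eq₂₃ : (A (mate x₂)).1 = (A (mate x₃)).1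
  ne₀₁ : (A x₀).1 ≠ (A (mate x₀)).1
  ne₀₂ : (A x₀).1 ≠ (A x₁).1
  ne₀₃ : (A x₀).1 ≠ (A (mate x₂)).1
  ne₁₂ : (A (mate x₀)).1 ≠ (A x₁).1
  ne₁₃ : (A (mate x₀)).1 ≠ (A (mate x₂)).1
  ne₂₃ : (A x₁).1 ≠ (A (mate x₂)).1

variable [Fintype ι] [DecidableEq ι] {Q : Type*} [AddCommGroup Q]
  {Ψ : Perm (ι × Fin 2) → Perm (ι × Fin 2) → Q} {A g h : Perm (ι × Fin 2)}

local notation "𝓑" => blockSubgroup ι (Fin 2)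

lemma card_blockSubgroup : Fintype.card 𝓑 = 2 ^ Fintype.card ι := by
  rw [Fintype.card_congr blockEquiv.symm]
  simp [Fintype.card_perm]

lemma Biinvariant.balance_congr (hΨ : Biinvariant 𝓑 Ψ)
    (b : 𝓑) (hgh : ∀ p, (g (b.1 p)).1 = (h p).1) (u v) :
    balance 𝓑 Ψ g u v = balance 𝓑 Ψ h u v := by
  have hc : g * b * h⁻¹ ∈ 𝓑 := fun p => by simp [hgh]
  rw [← hΨ.balance_mul_right b, ← hΨ.balance_mul_left ⟨_, hc⟩ h, inv_mul_cancel_right]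

variable (Ψ) in
/-- The blocks are edges on a set of vertices which is itself the set of blocks: under `g` the block
`a` is the edge joining the blocks of `g (a, 0)` and `g (a, 1)`. This says that `Ψ` is balanced
along all `g` whose graph has a loop. -/
structure LoopBalanced : Prop where
  biinvariant : Biinvariant 𝓑 Ψ
  balanced_of_loop : ∀ g a b, (∀ i, (g (a, i)).1 = b) → Balanced 𝓑 Ψ g

lemma LoopBalanced.balanced_of_mate (hΨ : LoopBalanced Ψ) {p : ι × Fin 2}
    (h : (A (mate p)).1 = (A p).1) : Balanced 𝓑 Ψ A := by
  refine hΨ.balanced_of_loop A p.1 (A p).1 fun i => ?_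
  rcases eq_or_eq_mate (p := p) (q := (p.1, i)) rfl with hi | hi
  · rw [hi]
  · rw [hi, h]

lemma LoopBalanced.flip (hΨ : LoopBalanced Ψ) : LoopBalanced (flip Ψ) where
  biinvariant := hΨ.biinvariant.flip
  balanced_of_loop g a b hg := by
    rw [← inv_inv g, balanced_flip_inv]
    exact hΨ.balanced_of_loop _ _ _ (inv_apply_fst_eq hg)

lemma LoopBalanced.balanced_swap (hΨ : LoopBalanced Ψ) (hι : 2 < Fintype.card ι)
    (x y : ι × Fin 2) : Balanced 𝓑 Ψ (swap x y) := by
  obtain ⟨a, -, ha⟩ : ∃ a ∈ univ, a ∉ ({x.1, y.1} : Finset ι) :=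
    exists_mem_notMem_of_card_lt_card (card_le_two.trans_lt hι)
  rw [mem_insert, mem_singleton, not_or] at ha
  refine hΨ.balanced_of_loop _ a a fun i => ?_
  rw [swap_apply_of_ne_of_ne] <;> rintro rfl
  · exact ha.1 rfl
  · exact ha.2 rfl

lemma Biinvariant.balance_swap_mul_swap (hΨ : Biinvariant 𝓑 Ψ) {x y z : ι × Fin 2}
    (hxy : x.1 ≠ y.1) (hA : (A (mate x)).1 = (A (mate y)).1) (hz : z.1 = y.1) (u v) :
    balance 𝓑 Ψ (A * swap (mate x) y * swap (mate x) z) u v = balance 𝓑 Ψ A u v := by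
  obtain rfl | rfl := eq_or_eq_mate hz
  · rw [mul_assoc, swap_mul_self, mul_one]
  · have hne := mate_ne y
    refine hΨ.balance_congr ⟨swap y (mate y), swap_mem_blockSubgroup rfl⟩ (fun p => ?_) u v
    grind [mate_fst, Perm.mul_apply]

lemma Biinvariant.balance_swap_mul_swap_mate (hΨ : Biinvariant 𝓑 Ψ) {x y z : ι × Fin 2}
    (hxy : x.1 ≠ y.1) (hA : (A (mate x)).1 = (A (mate y)).1) (hz : z.1 = y.1) (u v) :
    balance 𝓑 Ψ (A * swap (mate x) y * swap x z) u v = balance 𝓑 Ψ (A * swap x y) u v := by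
  have hx := mate_ne x
  have hy := mate_ne y
  obtain rfl | rfl := eq_or_eq_mate hz
  · refine hΨ.balance_congr ⟨swap x (mate x), swap_mem_blockSubgroup rfl⟩ (fun p => ?_) u v
    grind [mate_fst, Perm.mul_apply]
  · refine hΨ.balance_congr (⟨swap x (mate x), swap_mem_blockSubgroup rfl⟩ *
      ⟨swap y (mate y), swap_mem_blockSubgroup rfl⟩) (fun p => ?_) u v
    simp only [Subgroup.coe_mul, Perm.mul_apply, swap_apply_def]
    grind [mate_fst]

/-- Exchanging the far ends of two adjacent edges. In the Hecke algebra, the product of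
`A * swap (mate x) y`, whose graph has a loop, with `swap (mate x) y` involves only the double
cosets of `A` and of `A * swap x y`. -/
lemma LoopBalanced.balance_mul_swap (hΨ : LoopBalanced Ψ) (hQ : IsSMulRegular Q 2)
    (hι : 2 < Fintype.card ι) {x y : ι × Fin 2} (hxy : x.1 ≠ y.1)
    (hA : (A (mate x)).1 = (A (mate y)).1) (u v) :
    balance 𝓑 Ψ (A * swap x y) u v = -balance 𝓑 Ψ A u v := by
  have balanced_mul_swap : Balanced 𝓑 Ψ (A * swap (mate x) y) := by
    have hne : mate y ≠ mate x := fun h => hxy (congrArg Prod.fst h).symm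
    exact hΨ.balanced_of_mate (p := y) (by simp [swap_apply_of_ne_of_ne hne (mate_ne y), hA])
  let term (b : 𝓑) : Q := balance 𝓑 Ψ (A * swap (mate x) y * b * swap (mate x) y) u v
  have term_eq : ∀ b : 𝓑, term b =
      balance 𝓑 Ψ (A * swap (mate x) y * swap (b.1 (mate x)) (b.1 y)) u v := fun b => by
    simp only [term]
    rw [mul_assoc, mul_swap_eq_swap_mul b.1, ← mul_assoc, hΨ.biinvariant.balance_mul_right]
  have term_of_fix : ∀ b : 𝓑, b.1 (mate x) = mate x → term b = balance 𝓑 Ψ A u v := fun b hb => by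
    rw [term_eq, hb, hΨ.biinvariant.balance_swap_mul_swap hxy hA (b.2 y)]
  have term_of_flip : ∀ b : 𝓑, b.1 (mate x) = x → term b = balance 𝓑 Ψ (A * swap x y) u v :=
    fun b hb => by rw [term_eq, hb, hΨ.biinvariant.balance_swap_mul_swap_mate hxy hA (b.2 y)]
  let flip : 𝓑 := ⟨swap x (mate x), swap_mem_blockSubgroup rfl⟩
  have pairing : ∀ b : 𝓑, term b + term (b * flip) =
      balance 𝓑 Ψ A u v + balance 𝓑 Ψ (A * swap x y) u v := fun b => by
    have hflip : (b * flip).1 (mate x) = b.1 x := by simp [flip]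
    obtain hb | hb := eq_or_eq_mate (b.2 x)
    · rw [term_of_fix b (by rw [apply_mate b.2, hb]), term_of_flip (b * flip) (hflip.trans hb)]
    · rw [term_of_flip b (by rw [apply_mate b.2, hb, mate_mate]),
        term_of_fix (b * flip) (hflip.trans hb), add_comm]
  have sum_term : ∑ b, term b = 0 :=
    sum_balance_mul_mul balanced_mul_swap (hΨ.balanced_swap hι _ _) u v
  rw [eq_neg_iff_add_eq_zero, add_comm]
  refine hQ.pow (Fintype.card ι) ?_
  calc (2 ^ Fintype.card ι) • (balance 𝓑 Ψ A u v + balance 𝓑 Ψ (A * swap x y) u v)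
      = ∑ b, (term b + term (b * flip)) := by
        simp only [pairing, sum_const, card_univ, card_blockSubgroup]
    _ = ∑ b, term b + ∑ b, term b := by
        rw [sum_add_distrib]
        exact congrArg _ (Equiv.sum_comp (Equiv.mulRight flip) term)
    _ = (2 ^ Fintype.card ι) • 0 := by rw [sum_term, add_zero, smul_zero]

lemma LoopBalanced.balance_mul_swap_of_common_edge (hΨ : LoopBalanced Ψ) (hQ : IsSMulRegular Q 2)
    (hι : 2 < Fintype.card ι) {x y p q : ι × Fin 2} (hxy : (A x).1 ≠ (A y).1) (hp : p ≠ x)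
    (hpx : (A p).1 = (A x).1) (hq : q ≠ y) (hqy : (A q).1 = (A y).1) (hpq : p.1 = q.1) (u v) :
    balance 𝓑 Ψ (A * swap x y) u v = -balance 𝓑 Ψ A u v := by
  have h := hΨ.flip.balance_mul_swap (A := A⁻¹) hQ hι hxy
    (by simpa [mate_eq_of_ne hpx (A.injective.ne hp), mate_eq_of_ne hqy (A.injective.ne hq)]) v u
  have hinv : A⁻¹ * swap (A x) (A y) = (A * swap x y)⁻¹ := by
    rw [mul_swap_eq_swap_mul, mul_inv_rev, swap_inv]
    simp
  rwa [hinv, balance_flip, balance_flip, inv_inv, inv_inv, neg_inj] at h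

lemma LoopBalanced.balanced_of_parallel (hΨ : LoopBalanced Ψ) (hQ : IsSMulRegular Q 2)
    (hι : 2 < Fintype.card ι) {x y : ι × Fin 2} (hxy : x.1 ≠ y.1)
    (hA : (A x).1 = (A y).1) (hA' : (A (mate x)).1 = (A (mate y)).1) : Balanced 𝓑 Ψ A := by
  intro u v
  have unchanged : balance 𝓑 Ψ (A * swap x y) u v = balance 𝓑 Ψ A u v := by
    refine hΨ.biinvariant.balance_congr 1 (fun p => ?_) u v
    simp only [Subgroup.coe_one, Perm.mul_apply, Perm.one_apply, swap_apply_def]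
    grind
  rw [hΨ.balance_mul_swap hQ hι hxy hA', neg_eq_iff_add_eq_zero, ← two_nsmul] at unchanged
  exact hQ.right_eq_zero_of_smul unchanged

/-- Two exchanges and three exchanges lead from the cycle to the same graph. -/
lemma LoopBalanced.balanced_of_fourCycle (hΨ : LoopBalanced Ψ) (hQ : IsSMulRegular Q 2)
    {x₀ x₁ x₂ x₃ : ι × Fin 2} (hA : IsFourCycle A x₀ x₁ x₂ x₃) : Balanced 𝓑 Ψ A := by
  obtain ⟨h₃₀, h₀₁, h₁₂, h₂₃, hv₀₁, hv₀₂, hv₀₃, hv₁₂, hv₁₃, hv₂₃⟩ := hA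
  have e₀₁ : x₀.1 ≠ x₁.1 := fst_ne_of_apply_fst_ne hv₀₂ (h₀₁ ▸ hv₀₁)
  have e₀₂ : x₀.1 ≠ x₂.1 := fst_ne_of_apply_fst_ne (h₁₂ ▸ hv₀₂) hv₀₃
  have e₀₃ : x₀.1 ≠ x₃.1 := fst_ne_of_apply_fst_ne (p := mate x₀) (h₃₀ ▸ hv₀₁.symm) (h₂₃ ▸ hv₁₃)
  have e₁₂ : x₁.1 ≠ x₂.1 :=
    fst_ne_of_apply_fst_ne (p := mate x₁) (h₀₁ ▸ h₁₂ ▸ hv₁₂) (h₀₁ ▸ hv₁₃)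
  have e₁₃ : x₁.1 ≠ x₃.1 := fst_ne_of_apply_fst_ne (h₃₀ ▸ hv₀₂.symm) (h₂₃ ▸ hv₂₃)
  have e₂₃ : x₂.1 ≠ x₃.1 :=
    fst_ne_of_apply_fst_ne (h₁₂ ▸ h₃₀ ▸ hv₀₂.symm) (h₁₂ ▸ h₂₃ ▸ hv₂₃)
  have hι : 2 < Fintype.card ι := Fintype.two_lt_card_iff.2 ⟨_, _, _, e₀₁, e₀₂, e₁₂⟩
  intro u v
  have m₀ := mate_ne x₀
  have m₁ := mate_ne x₁
  have even : balance 𝓑 Ψ (A * swap x₀ x₁ * swap x₂ x₃) u v = balance 𝓑 Ψ A u v := by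
    rw [hΨ.balance_mul_swap hQ hι e₂₃, hΨ.balance_mul_swap hQ hι e₀₁ h₀₁, neg_neg]
    grind [mate_fst, Perm.mul_apply]
  have odd : balance 𝓑 Ψ (A * swap x₃ (mate x₁) * swap x₀ x₂ * swap x₃ x₁) u v =
      -balance 𝓑 Ψ A u v := by
    rw [hΨ.balance_mul_swap_of_common_edge (p := mate x₀) (q := x₀) hQ hι,
      hΨ.balance_mul_swap_of_common_edge (p := mate x₁) (q := x₁) hQ hι,
      hΨ.balance_mul_swap_of_common_edge (p := x₀) (q := mate x₀) hQ hι, neg_neg]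
    all_goals grind [mate_fst, Perm.mul_apply]
  have odd_eq_even : balance 𝓑 Ψ (A * swap x₃ (mate x₁) * swap x₀ x₂ * swap x₃ x₁) u v =
      balance 𝓑 Ψ (A * swap x₀ x₁ * swap x₂ x₃) u v := by
    refine hΨ.biinvariant.balance_congr ⟨swap x₁ (mate x₁), swap_mem_blockSubgroup rfl⟩
      (fun p => ?_) u v
    grind [mate_fst, Perm.mul_apply]
  rw [odd, even, neg_eq_iff_add_eq_zero, ← two_nsmul] at odd_eq_even
  exact hQ.right_eq_zero_of_smul odd_eq_even

end Exchange

section FourBlocks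

lemma exists_forall_apply_fst_eq_iff {ι : Type*} (A : Perm (ι × Fin 2)) (v : ι) :
    ∃ p q, p ≠ q ∧ ∀ r, (A r).1 = v ↔ r = p ∨ r = q := by
  refine ⟨A⁻¹ (v, 0), A⁻¹ (v, 1), by simp, fun r => ?_⟩
  rw [Perm.eq_inv_iff_eq, Perm.eq_inv_iff_eq]
  exact ⟨fun h => eq_or_eq_mate (p := (v, 0)) h, by rintro (h | h) <;> rw [h]⟩

lemma exists_isFourCycle {A : Perm (Fin 4 × Fin 2)} (loopless : ∀ p, (A (mate p)).1 ≠ (A p).1)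
    (simple : ∀ p q, p ≠ q → (A p).1 = (A q).1 → (A (mate p)).1 ≠ (A (mate q)).1) :
    ∃ x₀ x₁ x₂ x₃, IsFourCycle A x₀ x₁ x₂ x₃ := by
  obtain ⟨p₀, p₁, hp, zero_iff⟩ := exists_forall_apply_fst_eq_iff A 0
  have hp₀ := (zero_iff p₀).2 (Or.inl rfl)
  have hp₁ := (zero_iff p₁).2 (Or.inr rfl)
  have hp_far := simple p₀ p₁ hp (hp₀.trans hp₁.symm)
  have hloop₀ := hp₀ ▸ loopless p₀
  have hloop₁ := hp₁ ▸ loopless p₁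
  obtain ⟨v, hv, hv₀, hv₁⟩ :
      ∃ v : Fin 4, v ≠ 0 ∧ v ≠ (A (mate p₀)).1 ∧ v ≠ (A (mate p₁)).1 := by
    generalize (A (mate p₀)).1 = a
    generalize (A (mate p₁)).1 = b
    decide +revert
  obtain ⟨q₀, q₁, hq, v_iff⟩ := exists_forall_apply_fst_eq_iff A v
  have hq₀ := (v_iff q₀).2 (Or.inl rfl)
  have hq₁ := (v_iff q₁).2 (Or.inr rfl)
  have hq_far := simple q₀ q₁ hq (hq₀.trans hq₁.symm)
  have far_eq : ∀ r, (A r).1 = v → (A (mate r)).1 = (A (mate p₀)).1 ∨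
      (A (mate r)).1 = (A (mate p₁)).1 := fun r hr => by
    have hne : (A (mate r)).1 ≠ 0 := fun h => by
      rcases (zero_iff _).1 h with h | h
      · exact hv₀ (by rw [← h, mate_mate, hr])
      · exact hv₁ (by rw [← h, mate_mate, hr])
    have hloop := hr ▸ loopless r
    omega
  obtain ⟨h₀, h₁⟩ | ⟨h₀, h₁⟩ : ((A (mate q₀)).1 = (A (mate p₀)).1 ∧
      (A (mate q₁)).1 = (A (mate p₁)).1) ∨ ((A (mate q₁)).1 = (A (mate p₀)).1 ∧
      (A (mate q₀)).1 = (A (mate p₁)).1) := by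
    have := far_eq q₀ hq₀
    have := far_eq q₁ hq₁
    omega
  · refine ⟨mate p₀, mate p₁, mate q₁, mate q₀, ?_⟩
    constructor <;> first | omega | simp only [mate_mate]; omega
  · refine ⟨mate p₀, mate p₁, mate q₀, mate q₁, ?_⟩
    constructor <;> first | omega | simp only [mate_mate]; omega

variable {Q : Type*} [AddCommGroup Q] {Ψ : Perm (Fin 4 × Fin 2) → Perm (Fin 4 × Fin 2) → Q}

theorem LoopBalanced.balanced (hΨ : LoopBalanced Ψ) (hQ : IsSMulRegular Q 2)
    (A : Perm (Fin 4 × Fin 2)) : Balanced (blockSubgroup (Fin 4) (Fin 2)) Ψ A := by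
  by_contra hA
  have loopless : ∀ p, (A (mate p)).1 ≠ (A p).1 := fun p h => hA (hΨ.balanced_of_mate h)
  have simple : ∀ x y, x.1 ≠ y.1 → (A x).1 = (A y).1 → (A (mate x)).1 ≠ (A (mate y)).1 :=
    fun x y hxy h h' => hA (hΨ.balanced_of_parallel hQ (by simp) hxy h h')
  obtain ⟨x₀, x₁, x₂, x₃, h⟩ := exists_isFourCycle loopless fun p q hne h =>
    simple p q (fun hpq => loopless p (mate_eq_of_ne hpq.symm hne.symm ▸ h.symm)) h
  exact hA (hΨ.balanced_of_fourCycle hQ h)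

end FourBlocks

section SignedVar

variable (k : Type*) [CommRing k] {t m n : ℕ}

/-- The minor whose rows and columns are the entries of `u` and of `v`. -/
def rangeIndex {u : Fin t → Fin m} {v : Fin t → Fin n} (h : u.Injective ∧ v.Injective) :
    MinorIndex t m n :=
  ⟨(univ.image u, univ.image v), by simp [card_image_of_injective, h.1],
    by simp [card_image_of_injective, h.2]⟩

/-- The indeterminate of the minor with rows `u` and columns `v`, made alternating in both
sequences: it carries the signs of the permutations sorting them, and vanishes if one of them has a
repetition. -/
noncomputable def signedVar (u : Fin t → Fin m) (v : Fin t → Fin n) :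
    MvPolynomial (MinorIndex t m n) k :=
  if h : u.Injective ∧ v.Injective then
    (sign (Tuple.sort u) * sign (Tuple.sort v)) • X (rangeIndex h)
  else 0

lemma sign_sort_comp {α : Type*} [LinearOrder α] {u : Fin t → α} (hu : u.Injective)
    (σ : Perm (Fin t)) : sign (Tuple.sort (u ∘ σ)) = sign σ * sign (Tuple.sort u) := by
  have h : σ * Tuple.sort (u ∘ σ) = Tuple.sort u :=
    Equiv.ext fun i => hu (congrFun (Tuple.comp_perm_comp_sort_eq_comp_sort (σ := σ)) i)
  rw [← h, Perm.sign_mul, ← mul_assoc, Int.units_mul_self, one_mul]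

lemma signedVar_comp (u : Fin t → Fin m) (v : Fin t → Fin n) (σ τ : Perm (Fin t)) :
    signedVar k (u ∘ σ) (v ∘ τ) = (sign σ * sign τ) • signedVar k u v := by
  by_cases h : u.Injective ∧ v.Injective
  · have h' : (u ∘ σ).Injective ∧ (v ∘ τ).Injective := ⟨h.1.comp σ.injective, h.2.comp τ.injective⟩
    have image_comp : ∀ {l} (w : Fin t → Fin l) (ρ : Perm (Fin t)),
        univ.image (w ∘ ρ) = univ.image w := fun w ρ => by rw [← image_image]; simp
    have rangeIndex_comp : rangeIndex h' = rangeIndex h :=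
      Subtype.ext (Prod.ext (image_comp u σ) (image_comp v τ))
    rw [signedVar, signedVar, dif_pos h, dif_pos h', sign_sort_comp h.1, sign_sort_comp h.2,
      rangeIndex_comp, smul_smul, mul_mul_mul_comm]
  · have h' : ¬((u ∘ σ).Injective ∧ (v ∘ τ).Injective) := by
      simpa only [EquivLike.injective_comp] using h
    rw [signedVar, signedVar, dif_neg h, dif_neg h', smul_zero]

lemma totalDegree_signedVar_le (u : Fin t → Fin m) (v : Fin t → Fin n) :
    (signedVar k u v).totalDegree ≤ 1 := by
  unfold signedVar
  split_ifs with h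
  · rw [Units.smul_def, ← Int.cast_smul_eq_zsmul k]
    refine (totalDegree_smul_le ..).trans ?_
    exact (totalDegree_monomial_le ..).trans (by simp)
  · simp

lemma exists_signedVar_eq_X (p : MinorIndex t m n) : ∃ u v, signedVar k u v = X p := by
  obtain ⟨⟨I, J⟩, hI, hJ⟩ := p
  refine ⟨I.orderEmbOfFin hI, J.orderEmbOfFin hJ, ?_⟩
  have sort_eq_one : ∀ {l} (K : Finset (Fin l)) (hK : K.card = t),
      Tuple.sort (K.orderEmbOfFin hK) = 1 := fun K hK =>
    Tuple.sort_eq_refl_iff_monotone.2 (K.orderEmbOfFin hK).monotone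
  rw [signedVar, dif_pos ⟨(I.orderEmbOfFin hI).injective, (J.orderEmbOfFin hJ).injective⟩,
    sort_eq_one, sort_eq_one, map_one, one_mul, one_smul]
  exact congrArg X (Subtype.ext (Prod.ext (by simp [rangeIndex]) (by simp [rangeIndex])))

lemma det_submatrix_comp {α β ν R : Type*} [Fintype ν] [DecidableEq ν] [CommRing R]
    (M : Matrix α β R) (u : ν → α) (v : ν → β) (σ τ : Perm ν) :
    (M.submatrix (u ∘ σ) (v ∘ τ)).det = (sign σ * sign τ) • (M.submatrix u v).det := by
  calc _ = (((M.submatrix u v).submatrix σ id).submatrix id τ).det := rfl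
    _ = _ := by
      rw [Matrix.det_permute', Matrix.det_permute, ← mul_assoc, mul_comm (sign σ), Units.smul_def,
        zsmul_eq_mul]
      push_cast
      rfl

lemma minorPresentation_X (p : MinorIndex t m n) :
    minorPresentation k t m n (X p) =
      ((Matrix.mvPolynomialX (Fin m) (Fin n) k).submatrix
        (p.1.1.orderEmbOfFin p.2.1) (p.1.2.orderEmbOfFin p.2.2)).det := by
  rw [minorPresentation, aeval_X, genericMinor]
  rfl

lemma minorPresentation_signedVar (u : Fin t → Fin m) (v : Fin t → Fin n) :
    minorPresentation k t m n (signedVar k u v) =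
      ((Matrix.mvPolynomialX (Fin m) (Fin n) k).submatrix u v).det := by
  by_cases h : u.Injective ∧ v.Injective
  · have orderEmb_eq : ∀ {l} {w : Fin t → Fin l}, w.Injective → ∀ hK,
        ⇑((univ.image w).orderEmbOfFin hK) = w ∘ Tuple.sort w := fun {l w} hw hK =>
      (orderEmbOfFin_unique hK (fun i => mem_image_of_mem _ (mem_univ _))
        ((Tuple.monotone_sort w).strictMono_of_injective
          (hw.comp (Tuple.sort w).injective))).symm
    rw [signedVar, dif_pos h, Units.smul_def, map_zsmul, minorPresentation_X]
    simp only [rangeIndex, orderEmb_eq h.1, orderEmb_eq h.2]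
    rw [det_submatrix_comp, ← Units.smul_def, smul_smul, Int.units_mul_self, one_smul]
  · have not_injective : ¬u.Injective ∨ ¬v.Injective := not_and_or.1 h
    rw [signedVar, dif_neg h, map_zero]
    simp only [Function.Injective] at not_injective
    push Not at not_injective
    obtain ⟨i, j, hij, hne⟩ | ⟨i, j, hij, hne⟩ := not_injective
    · exact (Matrix.det_zero_of_row_eq hne (by ext; simp [hij])).symm
    · exact (Matrix.det_zero_of_column_eq hne (by simp [hij])).symm

lemma minorPresentation_signedVar_ne_zero [Nontrivial k] {u : Fin t → Fin m} {v : Fin t → Fin n}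
    (h : signedVar k u v ≠ 0) : minorPresentation k t m n (signedVar k u v) ≠ 0 := by
  obtain ⟨hu, hv⟩ : u.Injective ∧ v.Injective := by_contra fun h' => h (dif_neg h')
  have submatrix_eq : (Matrix.mvPolynomialX (Fin m) (Fin n) k).submatrix u v =
      (Matrix.mvPolynomialX (Fin t) (Fin t) k).map (rename (Prod.map u v)) := by
    ext i j
    simp
  rw [minorPresentation_signedVar, submatrix_eq, ← AlgHom.mapMatrix_apply,
    ← AlgHom.map_det]
  exact (map_ne_zero_iff _ (rename_injective _ (hu.prodMap hv))).2
    (Matrix.det_mvPolynomialX_ne_zero _ _)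

end SignedVar

section Bitableau

variable (k : Type*) [CommRing k] {t m n : ℕ} {ι : Type*} [Fintype ι]

/-- The monomial, up to sign, whose factor at `a` is the indeterminate of the minor with rows
`r (a, ·)` and columns `c (a, ·)`. -/
noncomputable def bitableau (r : ι × Fin t → Fin m) (c : ι × Fin t → Fin n) :
    MvPolynomial (MinorIndex t m n) k :=
  ∏ a, signedVar k (fun i => r (a, i)) fun i => c (a, i)

variable (r : ι × Fin t → Fin m) (c : ι × Fin t → Fin n)

lemma exists_bitableau_eq_mul (a : ι) : ∃ ρ : MvPolynomial (MinorIndex t m n) k,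
    ρ.totalDegree ≤ Fintype.card ι - 1 ∧
      bitableau k r c = signedVar k (fun i => r (a, i)) (fun i => c (a, i)) * ρ := by
  classical
  refine ⟨_, ?_, (mul_prod_erase univ _ (mem_univ a)).symm⟩
  refine (totalDegree_finsetProd _ _).trans ?_
  refine (sum_le_card_nsmul _ _ 1 fun b _ => totalDegree_signedVar_le ..).trans ?_
  simp [card_erase_of_mem]

variable [DecidableEq ι]

lemma bitableau_comp (b b' : blockSubgroup ι (Fin t)) :
    bitableau k (r ∘ b.1) (c ∘ b'.1) = (sign b.1 * sign b'.1) • bitableau k r c := by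
  obtain ⟨ε, rfl⟩ := blockEquiv.surjective b
  obtain ⟨ε', rfl⟩ := blockEquiv.surjective b'
  simp only [blockEquiv, coe_fn_mk, Perm.sign_prodCongrRight, ← prod_mul_distrib, bitableau,
    ← prod_smul]
  exact prod_congr rfl fun a _ =>
    signedVar_comp k (fun i => r (a, i)) (fun i => c (a, i)) (ε a) (ε' a)

lemma minorPresentation_bitableau :
    minorPresentation k t m n (bitableau k r c) =
      ∑ b : blockSubgroup ι (Fin t), sign b.1 • ∏ p, X (r (b.1 p), c p) := by
  simp only [bitableau, map_prod, minorPresentation_signedVar, Matrix.det_apply]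
  rw [prod_univ_sum, Fintype.piFinset_univ]
  refine Fintype.sum_equiv blockEquiv _ _ fun ε => ?_
  simp only [blockEquiv, coe_fn_mk, Perm.sign_prodCongrRight, prod_smul, Fintype.prod_prod_type]
  rfl

/-- The bitableaux obtained from `(r, c)` by permuting the entries of `r` and of `c`, with the signs
of these permutations. -/
noncomputable def orbit (x y : Perm (ι × Fin t)) : MvPolynomial (MinorIndex t m n) k :=
  (sign x * sign y) • bitableau k (r ∘ x) (c ∘ y)

lemma biinvariant_orbit : Biinvariant (blockSubgroup ι (Fin t)) (orbit k r c) := by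
  intro x y b hb
  have left := bitableau_comp k (r ∘ x) (c ∘ y) ⟨b, hb⟩ 1
  have right := bitableau_comp k (r ∘ x) (c ∘ y) 1 ⟨b, hb⟩
  simp only [Subgroup.coe_one, Perm.coe_one, map_one, one_mul, mul_one, Function.comp_id]
    at left right
  simp only [orbit, Perm.coe_mul, ← Function.comp_assoc, left, right, Perm.sign_mul, smul_smul]
  constructor <;> congr 1
  · rw [mul_right_comm, mul_assoc (sign x), Int.units_mul_self, mul_one]
  · rw [mul_assoc, mul_assoc, Int.units_mul_self, mul_one]

lemma orbit_comp_left (w x y : Perm (ι × Fin t)) :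
    orbit k (r ∘ w) c x y = sign w • orbit k r c (w * x) y := by
  simp only [orbit, Perm.sign_mul, smul_smul, ← mul_assoc, Int.units_mul_self, one_mul]
  rfl

lemma orbit_comp_comp (w x y : Perm (ι × Fin t)) :
    orbit k (r ∘ w) (c ∘ w) x y = orbit k r c (w * x) (w * y) := by
  simp only [orbit, Perm.sign_mul]
  rw [mul_mul_mul_comm, Int.units_mul_self, one_mul]
  rfl

lemma minorPresentation_orbit (x y : Perm (ι × Fin t)) :
    minorPresentation k t m n (orbit k r c x y) = ∑ b : blockSubgroup ι (Fin t),
      (sign (x * b.1) * sign y) • ∏ p, X (r ((x * b.1) p), c (y p)) := by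
  rw [orbit, Units.smul_def, map_zsmul, minorPresentation_bitableau, smul_sum]
  refine sum_congr rfl fun b _ => ?_
  rw [← Units.smul_def, smul_smul, Perm.sign_mul, mul_right_comm]
  rfl

lemma balance_orbit_mem_minorRelations (g x y : Perm (ι × Fin t)) :
    balance (blockSubgroup ι (Fin t)) (orbit k r c) g x y ∈ minorRelations k t m n := by
  let term (z w : Perm (ι × Fin t)) : MvPolynomial (Fin m × Fin n) k :=
    (sign z * sign w) • ∏ p, X (r (z p), c (w p))
  have term_mul : ∀ z w q, term (z * q) (w * q) = term z w := fun z w q => by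
    simp only [term, Perm.sign_mul]
    rw [mul_mul_mul_comm, Int.units_mul_self, mul_one]
    exact congrArg _ (Equiv.prod_comp q fun p => X (r (z p), c (w p)))
  have presentation_orbit : ∀ z w, minorPresentation k t m n (orbit k r c z w) =
      ∑ b : blockSubgroup ι (Fin t), term (z * b) w := minorPresentation_orbit k r c
  change minorPresentation k t m n _ = 0
  simp only [balance, map_sub, map_sum, presentation_orbit]
  rw [sub_eq_zero]
  calc _ = ∑ b : blockSubgroup ι (Fin t), ∑ b' : blockSubgroup ι (Fin t),
        term (x * b) (y * b' * g⁻¹) := by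
        refine sum_congr rfl fun b _ => Fintype.sum_equiv (Equiv.inv _) _ _ fun b' => ?_
        rw [← term_mul (x * b.1) _ (g * b'.1)]
        simp [mul_assoc]
    _ = _ := sum_comm

end Bitableau

section Relations

variable (k : Type*) [CommRing k] {t m n : ℕ} {ι : Type*} [Fintype ι] [DecidableEq ι]
  (r : ι × Fin t → Fin m) (c : ι × Fin t → Fin n)

variable {k r c} in
lemma orbit_mem_map_mulLeft {x y : Perm (ι × Fin t)} {a : ι} {u : Fin t → Fin m}
    {v : Fin t → Fin n} {σ τ : Perm (Fin t)} (hr : ∀ i, r (x (a, i)) = u (σ i))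
    (hc : ∀ i, c (y (a, i)) = v (τ i)) :
    orbit k r c x y ∈ (restrictTotalDegree (MinorIndex t m n) k (Fintype.card ι - 1)).map
      (LinearMap.mulLeft k (signedVar k u v)) := by
  obtain ⟨ρ, hρ, factor⟩ := exists_bitableau_eq_mul k (r ∘ x) (c ∘ y) a
  have hu : (fun i => (r ∘ x) (a, i)) = u ∘ σ := funext hr
  have hv : (fun i => (c ∘ y) (a, i)) = v ∘ τ := funext hc
  rw [orbit, factor, hu, hv, signedVar_comp, smul_mul_assoc]
  refine Submodule.smul_of_tower_mem _ _ (Submodule.smul_of_tower_mem _ _ ?_)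
  exact Submodule.mem_map_of_mem ((mem_restrictTotalDegree ..).2 hρ)

/-- Both sides of the exchange have a common factor, the minor of the block where `g` has a loop,
and cancelling it leaves a relation of smaller degree. -/
lemma balance_orbit_mem_span [IsDomain k] {g : Perm (ι × Fin t)} {a b : ι}
    (hg : ∀ i, (g (a, i)).1 = b) (x y : Perm (ι × Fin t)) :
    balance (blockSubgroup ι (Fin t)) (orbit k r c) g x y ∈
      Ideal.span {f | f ∈ minorRelations k t m n ∧ f.totalDegree ≤ Fintype.card ι - 1} := by
  let u (i : Fin t) : Fin m := r (x (b, i))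
  let v (i : Fin t) : Fin n := c (y (a, i))
  obtain ⟨ρ, hρ, factor⟩ : balance (blockSubgroup ι (Fin t)) (orbit k r c) g x y ∈
      (restrictTotalDegree (MinorIndex t m n) k (Fintype.card ι - 1)).map
        (LinearMap.mulLeft k (signedVar k u v)) := by
    refine sub_mem (sum_mem fun e _ => ?_) (sum_mem fun e _ => ?_)
    · obtain ⟨σ, hσ⟩ := exists_perm_apply_eq (g := e.1 * g) fun i => (e.2 _).trans (hg i)
      exact orbit_mem_map_mulLeft (τ := 1) (fun i => congrArg (r ∘ x) (hσ i)) fun _ => rfl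
    · obtain ⟨τ, hτ⟩ := exists_perm_apply_eq (g := e.1 * g⁻¹) fun i =>
        (e.2 _).trans (inv_apply_fst_eq hg i)
      exact orbit_mem_map_mulLeft (σ := 1) (fun _ => rfl) fun i => congrArg (c ∘ y) (hτ i)
  have relation := balance_orbit_mem_minorRelations k r c g x y
  rw [← factor, LinearMap.mulLeft_apply] at relation ⊢
  by_cases hzero : signedVar k u v = 0
  · simp [hzero]
  · refine Ideal.mul_mem_left _ _ (Ideal.subset_span ⟨?_, (mem_restrictTotalDegree ..).1 hρ⟩)
    have h : minorPresentation k t m n (signedVar k u v * ρ) = 0 := relation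
    rw [map_mul] at h
    exact (mul_eq_zero.1 h).resolve_left (minorPresentation_signedVar_ne_zero k hzero)

end Relations

section Monomials

variable {σ ι k : Type*} [Fintype ι]

lemma exists_comp_perm_eq_of_sum_single_eq {w w' : ι → σ}
    (h : ∑ i, Finsupp.single (w i) 1 = ∑ i, Finsupp.single (w' i) (1 : ℕ)) :
    ∃ g : Perm ι, w' ∘ g = w := by
  classical
  have fiber_equiv : ∀ x, Nonempty ({i // w i = x} ≃ {i // w' i = x}) := fun x => by
    rw [← Fintype.card_eq, Fintype.card_subtype, Fintype.card_subtype]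
    simpa [Finsupp.finsetSum_apply, Finsupp.single_apply] using DFunLike.congr_fun h x
  let e x := (fiber_equiv x).some
  exact ⟨Equiv.ofFiberEquiv e, funext (Equiv.ofFiberEquiv_map e)⟩

lemma exists_linearMap_prod_X [CommSemiring k] {Q : Type*} [AddCommMonoid Q] [Module k Q]
    (s : (ι → σ) → Q) (hs : ∀ w (g : Perm ι), s (w ∘ g) = s w) :
    ∃ L : MvPolynomial σ k →ₗ[k] Q, ∀ w, L (∏ i, X (w i)) = s w := by
  let exponent (w : ι → σ) : σ →₀ ℕ := ∑ i, Finsupp.single (w i) 1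
  have factors : s.FactorsThrough exponent := fun w w' h => by
    obtain ⟨g, rfl⟩ := exists_comp_perm_eq_of_sum_single_eq h
    exact hs w' g
  refine ⟨(basisMonomials σ k).constr k (Function.extend exponent s 0), fun w => ?_⟩
  have prod_X : ∏ i, X (w i) = basisMonomials σ k (exponent w) := by
    rw [coe_basisMonomials]
    exact (monomial_sum_one ..).symm
  rw [prod_X, Module.Basis.constr_basis, factors.extend_apply]

lemma mem_span_range_prod_X [CommSemiring k] {d : ℕ} {f : MvPolynomial σ k}
    (hf : f.IsHomogeneous d) :
    f ∈ Submodule.span k (Set.range fun w : Fin d → σ => ∏ i, (X (w i) : MvPolynomial σ k)) := by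
  rw [← mem_homogeneousSubmodule, ← homogeneousSubmodule_one_pow,
    homogeneousSubmodule_one_eq_span_X, Submodule.span_pow] at hf
  refine Submodule.span_mono (fun p hp => ?_) hf
  obtain ⟨x, rfl⟩ := Set.mem_pow.1 hp
  choose w hw using fun i => (x i).2
  exact ⟨w, by simp [hw, List.prod_ofFn]⟩

lemma mem_span_range_bitableau {k : Type*} [CommRing k] {t m n d : ℕ}
    {f : MvPolynomial (MinorIndex t m n) k} (hf : f.IsHomogeneous d) :
    f ∈ Submodule.span k (Set.range fun rc : (Fin d × Fin t → Fin m) × (Fin d × Fin t → Fin n) =>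
      bitableau k rc.1 rc.2) := by
  refine Submodule.span_mono ?_ (mem_span_range_prod_X hf)
  rintro _ ⟨w, rfl⟩
  choose u v huv using exists_signedVar_eq_X k (t := t) (m := m) (n := n)
  exact ⟨(fun p => u (w p.1) p.2, fun p => v (w p.1) p.2), prod_congr rfl fun a _ => huv (w a)⟩

end Monomials

section Criterion

variable {k : Type*} [Field k] {t m n : ℕ} {Q : Type*} [AddCommGroup Q] [Module k Q]
  (q : MvPolynomial (MinorIndex t m n) k →ₗ[k] Q)

lemma exists_linearMap_comp_minorPresentation_eq {ι : Type*} [Fintype ι] [DecidableEq ι]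
    [NeZero (Nat.card (Perm (ι × Fin t)) : k)]
    (hq : ∀ r c g, Balanced (blockSubgroup ι (Fin t)) (fun x y => q (orbit k r c x y)) g) :
    ∃ L : MvPolynomial (Fin m × Fin n) k →ₗ[k] Q,
      ∀ (r : ι × Fin t → Fin m) (c : ι × Fin t → Fin n),
        L (minorPresentation k t m n (bitableau k r c)) = q (bitableau k r c) := by
  obtain ⟨s, s_comp, s_sum⟩ :=
    exists_invariant_sum_eq (k := k) (Q := Q) (blockSubgroup ι (Fin t))
  let S (r : ι × Fin t → Fin m) (c : ι × Fin t → Fin n) : Q :=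
    s fun x y => q (orbit k r c x y)
  obtain ⟨L, hL⟩ : ∃ L : MvPolynomial (Fin m × Fin n) k →ₗ[k] Q,
      ∀ w : ι × Fin t → Fin m × Fin n, L (∏ p, X (w p)) = S (Prod.fst ∘ w) (Prod.snd ∘ w) :=
    exists_linearMap_prod_X _ fun w g => by
      simp only [S, ← Function.comp_assoc, orbit_comp_comp]
      exact s_comp (fun x y => q (orbit k (Prod.fst ∘ w) (Prod.snd ∘ w) x y)) g
  have S_comp_left : ∀ r c (w : Perm (ι × Fin t)),
      S (r ∘ w) c = sign w • s fun x y => q (orbit k r c (w * x) y) := fun r c w => by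
    rw [← LinearMap.map_smul_of_tower]
    refine congrArg s (funext₂ fun x y => ?_)
    rw [orbit_comp_left, LinearMap.map_smul_of_tower]
    rfl
  refine ⟨L, fun r c => ?_⟩
  calc L (minorPresentation k t m n (bitableau k r c))
      = ∑ b : blockSubgroup ι (Fin t), sign b.1 • S (r ∘ b.1) c := by
        rw [minorPresentation_bitableau, map_sum]
        refine sum_congr rfl fun b _ => ?_
        rw [LinearMap.map_smul_of_tower, hL fun p => (r (b.1 p), c p)]
        rfl
    _ = q (orbit k r c 1 1) := by
        simp only [S_comp_left, smul_smul, Int.units_mul_self, one_smul]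
        exact s_sum _ ((biinvariant_orbit k r c).comp q) (hq r c)
    _ = q (bitableau k r c) := by simp [orbit]

lemma map_eq_zero_of_balanced_orbit {d : ℕ} [NeZero (Nat.card (Perm (Fin d × Fin t)) : k)]
    (hq : ∀ r c g, Balanced (blockSubgroup (Fin d) (Fin t)) (fun x y => q (orbit k r c x y)) g)
    {f : MvPolynomial (MinorIndex t m n) k} (hf : f ∈ minorRelations k t m n)
    (hd : f.IsHomogeneous d) : q f = 0 := by
  obtain ⟨L, hL⟩ := exists_linearMap_comp_minorPresentation_eq q hq
  have presentation_f : minorPresentation k t m n f = 0 := hf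
  suffices h : f ∈ LinearMap.eqLocus (L ∘ₗ (minorPresentation k t m n).toLinearMap) q by
    rw [LinearMap.mem_eqLocus] at h
    simp [← h, presentation_f]
  refine Submodule.span_le.2 ?_ (mem_span_range_bitableau hd)
  rintro _ ⟨⟨r, c⟩, rfl⟩
  exact hL r c

end Criterion

lemma loopBalanced_mk_orbit {k : Type*} [CommRing k] [IsDomain k] {m n : ℕ} {ι : Type*} [Fintype ι]
    [DecidableEq ι] (r : ι × Fin 2 → Fin m) (c : ι × Fin 2 → Fin n) :
    LoopBalanced fun x y => Ideal.Quotient.mk (Ideal.span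
      {f | f ∈ minorRelations k 2 m n ∧ f.totalDegree ≤ Fintype.card ι - 1}) (orbit k r c x y) where
  biinvariant := (biinvariant_orbit k r c).comp _
  balanced_of_loop g a b hg x y := by
    have h := Ideal.Quotient.eq_zero_iff_mem.2 (balance_orbit_mem_span k r c hg x y)
    simpa only [balance, map_sub, map_sum] using h

end MinorRelation

theorem minorRelations_no_quartic_minimal_generator_general (k : Type*) [Field k]
    (hk : (Nat.factorial 8 : k) ≠ 0) (m n : ℕ) :
    ∀ f : MvPolynomial (MinorIndex 2 m n) k,
      f ∈ minorRelations k 2 m n → f.IsHomogeneous 4 →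
      f ∈ Ideal.span {x | x ∈ minorRelations k 2 m n ∧ x.totalDegree ≤ 3} := by
  intro f hf hd
  let low : Ideal (MvPolynomial (MinorIndex 2 m n) k) :=
    Ideal.span {x | x ∈ minorRelations k 2 m n ∧ x.totalDegree ≤ 3}
  have : NeZero (Nat.card (Equiv.Perm (Fin 4 × Fin 2)) : k) :=
    ⟨by simpa [Nat.card_eq_fintype_card, Fintype.card_perm] using hk⟩
  have two_ne_zero : (2 : k) ≠ 0 := fun h => hk <| by
    calc ((Nat.factorial 8 : ℕ) : k) = 2 * 20160 := by norm_num [Nat.factorial]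
      _ = 0 := by rw [h, zero_mul]
  have two_regular : IsSMulRegular (MvPolynomial (MinorIndex 2 m n) k ⧸ low) 2 := fun x y hxy =>
    smul_right_injective _ two_ne_zero (by simpa only [ofNat_smul_eq_nsmul] using hxy)
  refine Ideal.Quotient.eq_zero_iff_mem.1 (MinorRelation.map_eq_zero_of_balanced_orbit
    (Ideal.Quotient.mkₐ k low).toLinearMap (fun r c g => ?_) hf hd)
  exact (MinorRelation.loopBalanced_mk_orbit r c).balanced two_regular g

/-- The ideal of relations among the 2-minors of a generic `m × n` matrix has no minimal
generators of degree 4: every homogeneous element of degree 4 of `J_2(m,n)` lies in the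
ideal generated by the elements of `J_2(m,n)` of degree at most 3. -/
theorem minorRelations_no_quartic_minimal_generator (k : Type*) [Field k] [CharZero k]
    (m n : ℕ) (hm : 2 ≤ m) (hmn : m ≤ n) :
    ∀ f : MvPolynomial (MinorIndex 2 m n) k,
      f ∈ minorRelations k 2 m n → f.IsHomogeneous 4 →
      f ∈ Ideal.span {x | x ∈ minorRelations k 2 m n ∧ x.totalDegree ≤ 3} := by
  exact minorRelations_no_quartic_minimal_generator_general k
    (Nat.cast_ne_zero.2 (Nat.factorial_ne_zero 8)) m n
end
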